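/- arXiv:2404.02005 — 2 statements merged into one kernel-verified Lean document; each statement's English description precedes it below -/
import Mathlib

section
/- Let (R, m) be an analytically unramified Noetherian local ring with conductor ideal 𝔠. Then for every element x ∈ m, the conductor is not contained in the principal ideal xR: 𝔠 ⊄ xR. -/
open CategoryTheory IsLocalRing

set_option synthInstance.maxHeartbeats 1000000
set_option maxHeartbeats 1000000

noncomputable section

/-- The integral closure `R̄` of `R` in its total ring of fractions, viewed as a type
(with its canonical `R`-algebra and `R`-module structures). -/
abbrev IntClosure (R : Type) [CommRing R] : Type :=
  ↥(integralClosure R (FractionRing R))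

/-- The quotient `R`-module `R̄/R`. -/
abbrev IntClosureQuot (R : Type) [CommRing R] : Type :=
  IntClosure R ⧸ LinearMap.range (Algebra.linearMap R (IntClosure R))

/-- The conductor ideal `𝔠 = Ann_R(R̄/R) = {r : R | r • R̄ ⊆ R}`. -/
def conductorIdeal (R : Type) [CommRing R] : Ideal R :=
  Module.annihilator R (IntClosureQuot R)

/-- A local ring `R` is analytically unramified if its `m`-adic completion is reduced. -/
def AnalyticallyUnramified (R : Type) [CommRing R] [IsLocalRing R] : Prop :=
  IsReduced (AdicCompletion (maximalIdeal R) R)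

/-- `R` is normal: it is reduced and equal to its integral closure `R̄` in its total
ring of fractions. -/
def IsNormalRing (R : Type) [CommRing R] : Prop :=
  IsReduced R ∧ integralClosure R (FractionRing R) = ⊥

/-- `Ext^i_R(M, N)` as a type. -/
abbrev ExtMod (R : Type) [CommRing R] (M : Type) [AddCommGroup M] [Module R M]
    (N : Type) [AddCommGroup N] [Module R N] (i : ℕ) : Type :=
  ↥(((Ext R (ModuleCat.{0} R) i).obj (Opposite.op (ModuleCat.of R M))).obj (ModuleCat.of R N))

/-- `M` has finite projective dimension over `R`:
`Ext^i_R(M, -)` vanishes for all `i` bigger than some `n`. -/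
def HasFiniteProjDim (R : Type) [CommRing R] (M : Type) [AddCommGroup M] [Module R M] : Prop :=
  ∃ n : ℕ, ∀ (N : ModuleCat.{0} R) (i : ℕ), n < i →
    Subsingleton ↥(((Ext R (ModuleCat.{0} R) i).obj (Opposite.op (ModuleCat.of R M))).obj N)

/-- `M` has finite injective dimension over `R`:
`Ext^i_R(-, M)` vanishes for all `i` bigger than some `n`. -/
def HasFiniteInjDim (R : Type) [CommRing R] (M : Type) [AddCommGroup M] [Module R M] : Prop :=
  ∃ n : ℕ, ∀ (N : ModuleCat.{0} R) (i : ℕ), n < i →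
    Subsingleton ↥(((Ext R (ModuleCat.{0} R) i).obj (Opposite.op N)).obj (ModuleCat.of R M))

/-- The depth of an `R`-module `M` over a local ring `(R, m)`: the least `i` such that
`Ext^i_R(R/m, M) ≠ 0` (`⊤` if there is no such `i`), valued in `WithBot (WithTop ℕ)`
for easy comparison with `ringKrullDim`. -/
def moduleDepth (R : Type) [CommRing R] [IsLocalRing R]
    (M : Type) [AddCommGroup M] [Module R M] : WithBot (WithTop ℕ) :=
  sInf { n : WithBot (WithTop ℕ) |
    ∃ i : ℕ, n = (i : ℕ) ∧ Nontrivial (ExtMod R (ResidueField R) M i) }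

/-- A Noetherian local ring is Gorenstein if it has finite injective dimension
as a module over itself. -/
def IsGorensteinLocal (R : Type) [CommRing R] [IsLocalRing R] : Prop :=
  IsNoetherianRing R ∧ HasFiniteInjDim R R

/-- A Noetherian local ring is Cohen–Macaulay if its depth equals its Krull dimension. -/
def IsCohenMacaulayLocal (R : Type) [CommRing R] [IsLocalRing R] : Prop :=
  IsNoetherianRing R ∧ moduleDepth R R = ringKrullDim R

/-- A ring is Cohen–Macaulay if it is Noetherian and all its localizations at primes
are Cohen–Macaulay local rings. -/
def IsCohenMacaulayRing (A : Type) [CommRing A] : Prop :=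
  IsNoetherianRing A ∧ ∀ (p : Ideal A) [p.IsPrime],
    moduleDepth (Localization.AtPrime p) (Localization.AtPrime p) =
      ringKrullDim (Localization.AtPrime p)

/-- Serre's condition `(S2)`: `depth (R_p) ≥ min {2, height p}` for every prime `p`
(`height p` being the dimension of `R_p`). -/
def SerreS2 (R : Type) [CommRing R] : Prop :=
  ∀ (p : Ideal R) [p.IsPrime],
    min 2 (ringKrullDim (Localization.AtPrime p)) ≤
      moduleDepth (Localization.AtPrime p) (Localization.AtPrime p)

/-- A Noetherian local ring is regular if its maximal ideal can be generated by
`dim R` elements. -/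
def IsRegularLocal (A : Type) [CommRing A] [IsLocalRing A] : Prop :=
  IsNoetherianRing A ∧ ∃ s : Finset A, Ideal.span (s : Set A) = maximalIdeal A ∧
    (s.card : WithBot (WithTop ℕ)) = ringKrullDim A

/-- Serre's condition `(R1)`: `R_p` is regular for every prime `p` of height at most `1`. -/
def SerreR1 (R : Type) [CommRing R] : Prop :=
  ∀ (p : Ideal R) [p.IsPrime], ringKrullDim (Localization.AtPrime p) ≤ 1 →
    IsRegularLocal (Localization.AtPrime p)

/-- The `i`-th local cohomology `H^i_m(M)` of `M` with support in the maximal ideal,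
as a type. -/
abbrev localCohMod (R : Type) [CommRing R] [IsLocalRing R] (i : ℕ)
    (M : Type) [AddCommGroup M] [Module R M] : Type :=
  ↥((localCohomology (maximalIdeal R) i).obj (ModuleCat.of R M))

/-- `x : Fin d → R` is a system of parameters for the local ring `(R, m)`:
`d = dim R`, all `x i` lie in `m`, and the ideal they generate is `m`-primary
(its radical is `m`). -/
def IsSystemOfParameters (R : Type) [CommRing R] [IsLocalRing R] {d : ℕ}
    (x : Fin d → R) : Prop :=
  (d : WithBot (WithTop ℕ)) = ringKrullDim R ∧ (∀ i, x i ∈ maximalIdeal R) ∧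
    (Ideal.span (Set.range x)).radical = maximalIdeal R

/-- `E` is an injective hull of the residue field of the local ring `R`:
`E` is injective and contains a copy of `R/m` as an essential submodule. -/
def IsInjectiveHullOfResidueField (R : Type) [CommRing R] [IsLocalRing R]
    (E : Type) [AddCommGroup E] [Module R E] : Prop :=
  Module.Injective R E ∧ ∃ f : ResidueField R →ₗ[R] E, Function.Injective f ∧
    ∀ N : Submodule R E, N ≠ ⊥ → N ⊓ LinearMap.range f ≠ ⊥

/-!
Write `R̄` for the integral closure and `𝔠` for the conductor. When `R̄` is finite over `R`, the
torsion module `R̄/R` is killed by a nonzerodivisor, so `𝔠` contains one. If `𝔠 ⊆ xR` with `x ∈ m`,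
then `x` is a nonzerodivisor and `x⁻¹𝔠` is an ideal of `R̄` contained in `R`; as `𝔠` is the largest
such ideal, `𝔠 = x𝔠`, and Nakayama's lemma gives `𝔠 = 0`, a contradiction.

Finiteness of `R̄` descends along the faithfully flat map `R → R̂`: since `R̂` is reduced, `R̂ ⊗ R̄`
embeds into the product of the normalizations of the complete local domains `R̂/P`, `P` minimal.
Such a domain contains a coefficient ring (Cohen) and is a finite extension of a power series ring
`A` over a field or a complete discrete valuation ring. By the trace form it remains to treat a
purely inseparable extension of `Frac A`. There some `q`-th power map embeds the integral closure
into `A`, viewed as a module over itself through Frobenius, as a submodule of finite rank; such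
submodules are finitely generated, by induction on the number of variables.
-/

section FormalSmoothness

open MvPolynomial

variable {F A σ : Type*} [CommRing F] [CommRing A] [Algebra F A]

lemma one_tmul_D_eq_zero_iff_pderiv [Algebra (MvPolynomial σ F) A]
    [IsScalarTower F (MvPolynomial σ F) A] (f : MvPolynomial σ F) :
    (1 : A) ⊗ₜ[MvPolynomial σ F] KaehlerDifferential.D F (MvPolynomial σ F) f = 0 ↔
      ∀ i, algebraMap (MvPolynomial σ F) A (pderiv i f) = 0 := by
  let b := (KaehlerDifferential.mvPolynomialBasis F σ).baseChange A
  rw [← b.repr.map_eq_zero_iff, Finsupp.ext_iff]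
  simp [b, Module.Basis.baseChange_repr_tmul, Algebra.smul_def]

lemma subsingleton_h1Cotangent_iff_pderiv (g : MvPolynomial σ F →ₐ[F] A)
    (hg : Function.Surjective g) :
    Subsingleton (Algebra.H1Cotangent F A) ↔
      ∀ f, g f = 0 → (∀ i, g (pderiv i f) = 0) → f ∈ RingHom.ker g ^ 2 := by
  let _ : Algebra (MvPolynomial σ F) A := g.toRingHom.toAlgebra
  have : IsScalarTower F (MvPolynomial σ F) A := .of_algebraMap_eq fun x ↦ (g.commutes x).symm
  have hsurj : Function.Surjective (algebraMap (MvPolynomial σ F) A) := hg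
  rw [← Algebra.FormallySmooth.kerCotangentToTensor_injective_iff (R := F) hsurj,
    injective_iff_map_eq_zero]
  constructor
  · intro hinj f hf hderiv
    have hf : f ∈ RingHom.ker (algebraMap (MvPolynomial σ F) A) := hf
    refine (Ideal.toCotangent_eq_zero _ ⟨f, hf⟩).mp (hinj _ ?_)
    rw [KaehlerDifferential.kerCotangentToTensor_toCotangent]
    exact (one_tmul_D_eq_zero_iff_pderiv f).mpr hderiv
  · intro hker m hm
    obtain ⟨⟨f, hf⟩, rfl⟩ := Ideal.toCotangent_surjective _ m
    rw [KaehlerDifferential.kerCotangentToTensor_toCotangent] at hm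
    rw [Ideal.toCotangent_eq_zero]
    exact hker f hf ((one_tmul_D_eq_zero_iff_pderiv f).mp hm)

/- Every relation among elements of `k` lives in a finitely generated subfield, where the
library provides formal smoothness. -/
theorem formallySmooth_of_perfectField (F k : Type*) [Field F] [PerfectField F] [Field k]
    [Algebra F k] : Algebra.FormallySmooth F k := by
  have surjective_aeval_id (E : Type _) [Field E] [Algebra F E] :
      Function.Surjective (aeval (R := F) (id : E → E)) := fun x ↦ ⟨X x, by simp⟩
  refine ⟨inferInstance, (subsingleton_h1Cotangent_iff_pderiv _ (surjective_aeval_id k)).mpr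
    fun f hf hderiv ↦ ?_⟩
  let E := IntermediateField.adjoin F (f.vars : Set k)
  have : Algebra.EssFiniteType F E := IntermediateField.essFiniteType_iff.mpr ⟨f.vars, rfl⟩
  have aeval_rename (q : MvPolynomial E F) :
      aeval (R := F) (id : k → k) (rename (↑) q) = (aeval (R := F) (id : E → E) q : k) := by
    have : (aeval (R := F) (id : k → k)).comp (rename (↑)) =
        E.val.comp (aeval (R := F) (id : E → E)) := by ext; simp
    exact DFunLike.congr_fun this q
  obtain ⟨f₀, hf₀⟩ := exists_rename_eq_of_vars_subset_range f ((↑) : E → k) Subtype.val_injective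
    fun x hx ↦ ⟨⟨x, IntermediateField.subset_adjoin _ _ hx⟩, rfl⟩
  have hmem : f₀ ∈ RingHom.ker (aeval (R := F) (id : E → E)) ^ 2 := by
    refine (subsingleton_h1Cotangent_iff_pderiv _ (surjective_aeval_id E)).mp inferInstance f₀
      ?_ fun i ↦ ?_
    · rwa [← hf₀, aeval_rename, ZeroMemClass.coe_eq_zero] at hf
    · simpa only [← hf₀, pderiv_rename Subtype.val_injective, aeval_rename,
        ZeroMemClass.coe_eq_zero] using hderiv i
  have hmap := Ideal.mem_map_of_mem (rename ((↑) : E → k) : MvPolynomial E F →ₐ[F] _) hmem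
  rw [Ideal.map_pow, hf₀] at hmap
  refine Ideal.pow_right_mono (Ideal.map_le_iff_le_comap.mpr fun q hq ↦ ?_) 2 hmap
  rw [RingHom.mem_ker] at hq
  rw [Ideal.mem_comap, RingHom.mem_ker, aeval_rename, hq, ZeroMemClass.coe_zero]

end FormalSmoothness

section AdicCompleteness

lemma isPrecomplete_pi {A ι : Type*} [CommRing A] [Finite ι] (I : Ideal A) [IsPrecomplete I A] :
    IsPrecomplete I (ι → A) := by
  have := Fintype.ofFinite ι
  classical
  refine ⟨fun f hf ↦ ?_⟩
  have cauchy_apply (i : ι) {m n : ℕ} (hmn : m ≤ n) :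
      f m i ≡ f n i [SMOD (I ^ m • ⊤ : Submodule A A)] := by
    have hmem := Submodule.mem_map_of_mem (f := LinearMap.proj (R := A) (φ := fun _ : ι ↦ A) i)
      (SModEq.sub_mem.mp (hf hmn))
    rw [Submodule.map_smul''] at hmem
    exact SModEq.sub_mem.mpr (Submodule.smul_mono le_rfl le_top hmem)
  choose L hL using fun i ↦ IsPrecomplete.prec (I := I) inferInstance (cauchy_apply i)
  refine ⟨L, fun m ↦ ?_⟩
  rw [SModEq.sub_mem, pi_eq_sum_univ' (f m - L)]
  refine Submodule.sum_mem _ fun i _ ↦ Submodule.smul_mem_smul ?_ trivial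
  simpa using SModEq.sub_mem.mp (hL i m)

theorem finite_of_finite_quotient_smul_top {A M : Type*} [CommRing A] [AddCommGroup M]
    [Module A M] (I : Ideal A) [IsPrecomplete I A] [IsHausdorff I M]
    [Module.Finite A (M ⧸ (I • ⊤ : Submodule A M))] : Module.Finite A M := by
  obtain ⟨n, f, hf⟩ := Module.Finite.exists_fin' A (M ⧸ (I • ⊤ : Submodule A M))
  obtain ⟨g, hg⟩ := Module.projective_lifting_property (Submodule.mkQ _) f
    (Submodule.mkQ_surjective _)
  have := isPrecomplete_pi (ι := Fin n) I
  exact .of_surjective g (surjective_of_mkQ_comp_surjective (I := I) (hg ▸ hf))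

lemma isHausdorff_of_le {A M : Type*} [CommRing A] [AddCommGroup M] [Module A M] {I J : Ideal A}
    [IsHausdorff J M] (h : I ≤ J) : IsHausdorff I M :=
  ⟨fun x hx ↦ IsHausdorff.haus (I := J) inferInstance x fun n ↦
    (hx n).mono (Submodule.smul_mono_left (Ideal.pow_right_mono h n))⟩

lemma isHausdorff_of_injective {A M N : Type*} [CommRing A] [AddCommGroup M] [AddCommGroup N]
    [Module A M] [Module A N] {I : Ideal A} [IsHausdorff I N] (f : M →ₗ[A] N)
    (hf : Function.Injective f) : IsHausdorff I M := by
  refine ⟨fun x hx ↦ hf ?_⟩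
  rw [map_zero]
  refine IsHausdorff.haus (I := I) inferInstance _ fun n ↦ ?_
  have hmap := (hx n).map f
  rw [map_zero, Submodule.map_smul''] at hmap
  exact hmap.mono (Submodule.smul_mono le_rfl le_top)

end AdicCompleteness

section PowerSeriesPresentation

variable {S B : Type*} [CommRing S] [CommRing B] (I : Ideal B) [IsAdicComplete I B]
  (f : S →+* B) {σ : Type*} [Finite σ] (x : σ → B)

lemma exists_mvPowerSeries_hom (hx : ∀ i, x i ∈ I) :
    ∃ g : MvPowerSeries σ S →+* B, g.comp MvPowerSeries.C = f ∧
      ∀ i, g (MvPowerSeries.X i) = x i := by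
  let _ : WithIdeal B := ⟨I⟩
  let _ : UniformSpace S := ⊥
  have : DiscreteUniformity S := ⟨rfl⟩
  have hI : IsAdic I := by rfl
  obtain ⟨_, _⟩ := hI.isAdicComplete_iff.mp inferInstance
  have hf : Continuous f := continuous_of_discreteTopology
  have heval : MvPowerSeries.HasEval x := by
    refine ⟨fun i ↦ hI.hasBasis_nhds_zero.tendsto_right_iff.mpr fun k _ ↦ ?_, by simp⟩
    filter_upwards [Filter.eventually_ge_atTop k] with m hm
    exact Ideal.pow_le_pow_right hm (Ideal.pow_mem_pow (hx i) m)
  refine ⟨MvPowerSeries.eval₂Hom hf heval, RingHom.ext fun s ↦ ?_, fun i ↦ ?_⟩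
  · rw [RingHom.comp_apply, MvPowerSeries.coe_eval₂Hom, MvPowerSeries.eval₂_C]
  · rw [MvPowerSeries.coe_eval₂Hom, MvPowerSeries.eval₂_X]

lemma exists_finite_mvPowerSeries_hom (hx : ∀ i, x i ∈ I)
    (hfin : ((Ideal.Quotient.mk (Ideal.span (Set.range x))).comp f).Finite) :
    ∃ g : MvPowerSeries σ S →+* B, g.Finite := by
  obtain ⟨g, rfl, hgx⟩ := exists_mvPowerSeries_hom I f x hx
  refine ⟨g, ?_⟩
  algebraize [g]
  let 𝔛 : Ideal (MvPowerSeries σ S) := Ideal.span (Set.range MvPowerSeries.X)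
  have map_vars : 𝔛.map (algebraMap (MvPowerSeries σ S) B) = Ideal.span (Set.range x) := by
    rw [Ideal.map_span, ← Set.range_comp]
    exact congrArg (fun y ↦ Ideal.span (Set.range y)) (funext hgx)
  have : IsHausdorff 𝔛 B := by
    rw [← IsHausdorff.map_algebraMap_iff (S := B), map_vars]
    exact isHausdorff_of_le (J := I) (Ideal.span_le.mpr (Set.range_subset_iff.mpr hx))
  have : Module.Finite (MvPowerSeries σ S) (B ⧸ (𝔛 • ⊤ : Submodule (MvPowerSeries σ S) B)) := by
    rw [Ideal.smul_top_eq_map, map_vars]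
    exact RingHom.Finite.of_comp_finite (f := MvPowerSeries.C)
      (g := (Ideal.Quotient.mk (Ideal.span (Set.range x))).comp g) hfin
  exact finite_of_finite_quotient_smul_top 𝔛

end PowerSeriesPresentation

section PowerSeriesIntegrallyClosed

open PowerSeries

variable {S B : Type*} [CommRing S] [CommRing B] [Algebra S B]

lemma isAlmostIntegral_constantCoeff [IsDomain S] {h : B⟦X⟧} (hh : IsAlmostIntegral S⟦X⟧ h) :
    IsAlmostIntegral S (constantCoeff h) := by
  obtain ⟨c, hc, hcn⟩ := hh
  have hc0 : c ≠ 0 := nonZeroDivisors.ne_zero hc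
  obtain ⟨d, hd⟩ := X_pow_order_dvd (φ := c)
  set k := c.order.toNat
  refine ⟨coeff k c, mem_nonZeroDivisors_of_ne_zero (coeff_order hc0), fun n ↦ ?_⟩
  obtain ⟨e, he⟩ := hcn n
  have coeff_c : coeff k c = constantCoeff d := by
    rw [hd, coeff_X_pow_mul', if_pos le_rfl, Nat.sub_self, coeff_zero_eq_constantCoeff_apply]
  have map_c : algebraMap S⟦X⟧ B⟦X⟧ c = X ^ k * map (algebraMap S B) d := by
    rw [algebraMap_apply'', hd, map_mul, map_pow, map_X]
  refine ⟨coeff k e, ?_⟩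
  calc algebraMap S B (coeff k e)
      = coeff k (X ^ k * (map (algebraMap S B) d * h ^ n)) := by
        rw [← coeff_map, ← algebraMap_apply'', he, Algebra.smul_def, map_c, mul_assoc]
    _ = constantCoeff (map (algebraMap S B) d * h ^ n) := by
        rw [coeff_X_pow_mul', if_pos le_rfl, Nat.sub_self, coeff_zero_eq_constantCoeff_apply]
    _ = coeff k c • constantCoeff h ^ n := by
        rw [map_mul, map_pow, ← coeff_zero_eq_constantCoeff_apply (map _ d), coeff_map,
          coeff_zero_eq_constantCoeff_apply, ← coeff_c, Algebra.smul_def]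

lemma isAlmostIntegral_of_X_mul {h : B⟦X⟧} (hh : IsAlmostIntegral S⟦X⟧ (X * h)) :
    IsAlmostIntegral S⟦X⟧ h := by
  obtain ⟨c, hc, hcn⟩ := hh
  refine ⟨c, hc, fun n ↦ ?_⟩
  obtain ⟨e, he⟩ := hcn n
  refine ⟨mk fun i ↦ coeff (i + n) e, ?_⟩
  ext i
  have coeff_e := congrArg (coeff (i + n)) he
  rw [mul_pow, ← mul_smul_comm, coeff_X_pow_mul, algebraMap_apply'', coeff_map] at coeff_e
  rw [← coeff_e, algebraMap_apply'', coeff_map, coeff_mk]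

lemma coeff_mem_range_of_isAlmostIntegral [IsDomain S]
    (hS : ∀ y : B, IsAlmostIntegral S y → y ∈ (algebraMap S B).range) (n : ℕ) {h : B⟦X⟧}
    (hh : IsAlmostIntegral S⟦X⟧ h) : coeff n h ∈ (algebraMap S B).range := by
  have constantCoeff_mem {h : B⟦X⟧} (hh : IsAlmostIntegral S⟦X⟧ h) :=
    hS _ (isAlmostIntegral_constantCoeff hh)
  induction n generalizing h with
  | zero => simpa using constantCoeff_mem hh
  | succ n ih =>
    obtain ⟨s, hs⟩ := constantCoeff_mem hh
    obtain ⟨h', hh'⟩ : X ∣ h - C (constantCoeff h) := by simp [X_dvd_iff]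
    have X_mul : IsAlmostIntegral S⟦X⟧ (X * h') := by
      rw [← hh', ← mem_completeIntegralClosure, ← hs, ← map_C, ← algebraMap_apply'']
      exact Subalgebra.sub_mem _ hh (Subalgebra.algebraMap_mem _ _)
    have hmem := ih (isAlmostIntegral_of_X_mul X_mul)
    rwa [← coeff_succ_X_mul, ← hh', map_sub, coeff_succ_C, sub_zero] at hmem

instance isIntegrallyClosed_powerSeries [IsDomain S] [IsNoetherianRing S] [IsIntegrallyClosed S] :
    IsIntegrallyClosed S⟦X⟧ := by
  let K := FractionRing S
  let L := FractionRing K⟦X⟧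
  have hinjL : Function.Injective (algebraMap K⟦X⟧ L) := IsFractionRing.injective _ _
  have : FaithfulSMul S⟦X⟧ L := by
    rw [faithfulSMul_iff_algebraMap_injective, IsScalarTower.algebraMap_eq S⟦X⟧ K⟦X⟧ L]
    exact hinjL.comp (map_injective _ (IsFractionRing.injective S K))
  let _ := FractionRing.liftAlgebra S⟦X⟧ L
  refine (isIntegrallyClosed_iff (FractionRing S⟦X⟧)).mpr fun {y} hy ↦ ?_
  have hyL : IsIntegral S⟦X⟧ (algebraMap _ L y) := hy.algebraMap
  obtain ⟨h, hh⟩ := IsIntegrallyClosed.isIntegral_iff.mp (hyL.tower_top (A := K⟦X⟧))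
  have h_integral : IsIntegral S⟦X⟧ h := (isIntegral_algebraMap_iff hinjL).mp (hh ▸ hyL)
  obtain ⟨⟨a, b⟩, hab⟩ := IsLocalization.surj (nonZeroDivisors S⟦X⟧) y
  have smul_h : algebraMap _ _ a = (b : S⟦X⟧) • h := by
    apply hinjL
    rw [Algebra.smul_def, map_mul, hh, ← IsScalarTower.algebraMap_apply,
      ← IsScalarTower.algebraMap_apply, IsScalarTower.algebraMap_apply _ (FractionRing S⟦X⟧) L,
      ← hab, map_mul, ← IsScalarTower.algebraMap_apply, mul_comm]
  have halmost := h_integral.isAlmostIntegral_of_exists_smul_mem_range ⟨b, b.2, a, smul_h⟩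
  choose g hg using fun n ↦ coeff_mem_range_of_isAlmostIntegral (S := S)
    (fun y hy ↦ IsIntegrallyClosed.isIntegral_iff.mp hy.isIntegral) n halmost
  have map_g : algebraMap S⟦X⟧ K⟦X⟧ (mk g) = h := by
    ext n
    rw [algebraMap_apply'', coeff_map, coeff_mk, hg]
  refine ⟨mk g, (algebraMap (FractionRing S⟦X⟧) L).injective ?_⟩
  rw [← IsScalarTower.algebraMap_apply, IsScalarTower.algebraMap_apply S⟦X⟧ K⟦X⟧ L, map_g, hh]

end PowerSeriesIntegrallyClosed

section FiniteRankSubmodules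

open Cardinal

/-- Every submodule of finite rank is finitely generated. For the restriction of scalars of a ring
along powers of its Frobenius, this property survives the passage to power series and controls
purely inseparable integral closures. -/
def FiniteRankSubmodulesFG (R M : Type*) [CommRing R] [AddCommGroup M] [Module R M] : Prop :=
  ∀ N : Submodule R M, Module.rank R N < ℵ₀ → N.FG

variable {R M M' : Type*} [CommRing R] [AddCommGroup M] [Module R M] [AddCommGroup M'] [Module R M']

namespace FiniteRankSubmodulesFG

lemma of_isNoetherian [IsNoetherian R M] : FiniteRankSubmodulesFG R M :=
  fun N _ ↦ IsNoetherian.noetherian N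

lemma finite (h : FiniteRankSubmodulesFG R M) (hrank : Module.rank R M < ℵ₀) :
    Module.Finite R M :=
  ⟨h ⊤ (by rwa [rank_top])⟩

lemma fg_of_fg_inf_iInf_ker (h : FiniteRankSubmodulesFG R M) {ι : Type*} (s : Finset ι)
    (f : ι → M' →ₗ[R] M) (N : Submodule R M') (hN : Module.rank R N < ℵ₀)
    (hker : (N ⊓ ⨅ i ∈ s, LinearMap.ker (f i)).FG) : N.FG := by
  classical
  induction s using Finset.induction_on generalizing N with
  | empty => simpa using hker
  | insert a s _ ih =>
    refine Submodule.fg_of_fg_map_of_fg_inf_ker (f a) (h _ ?_) (ih _ ?_ ?_)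
    · rw [← lift_lt_aleph0]
      exact (lift_rank_map_le (f a) N).trans_lt (lift_lt_aleph0.mpr hN)
    · exact (Submodule.rank_mono inf_le_left).trans_lt hN
    · rwa [Finset.iInf_insert, ← inf_assoc] at hker

lemma of_iInf_ker_eq_bot (h : FiniteRankSubmodulesFG R M) {ι : Type*} [Finite ι]
    (f : ι → M' →ₗ[R] M) (hf : ⨅ i, LinearMap.ker (f i) = ⊥) : FiniteRankSubmodulesFG R M' := by
  have := Fintype.ofFinite ι
  refine fun N hN ↦ h.fg_of_fg_inf_iInf_ker Finset.univ f N hN ?_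
  simpa [hf] using Submodule.fg_bot

lemma of_injective (h : FiniteRankSubmodulesFG R M) (f : M' →ₗ[R] M) (hf : Function.Injective f) :
    FiniteRankSubmodulesFG R M' :=
  h.of_iInf_ker_eq_bot (fun _ : Unit ↦ f) (by simp [LinearMap.ker_eq_bot.mpr hf])

lemma pi (h : FiniteRankSubmodulesFG R M) (ι : Type*) [Finite ι] :
    FiniteRankSubmodulesFG R (ι → M) :=
  h.of_iInf_ker_eq_bot (fun i ↦ LinearMap.proj i) LinearMap.iInf_ker_proj

end FiniteRankSubmodulesFG

lemma rank_comap_torsion_quotient [IsDomain R] (N : Submodule R M) :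
    Module.rank R ((Submodule.torsion R (M ⧸ N)).comap N.mkQ) = Module.rank R N := by
  set N' := (Submodule.torsion R (M ⧸ N)).comap N.mkQ
  have hle : N ≤ N' := fun m hm ↦ by simp [N', (Submodule.Quotient.mk_eq_zero N).mpr hm]
  have quotient_rank : Module.rank R (N' ⧸ N.submoduleOf N') = 0 := by
    refine rank_eq_zero_iff.mpr fun y ↦ ?_
    obtain ⟨m, rfl⟩ := Submodule.Quotient.mk_surjective _ y
    obtain ⟨a, ha⟩ := (Submodule.mem_torsion_iff _).mp m.2
    refine ⟨a, nonZeroDivisors.ne_zero a.2, ?_⟩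
    rw [← Submodule.Quotient.mk_smul, Submodule.Quotient.mk_eq_zero]
    exact (Submodule.Quotient.mk_eq_zero N).mp ha
  rw [← rank_quotient_add_rank_of_isDomain (N.submoduleOf N'), quotient_rank, zero_add]
  exact (Submodule.submoduleOfEquivOfLe hle).rank_eq

end FiniteRankSubmodules

section PowerSeriesModules

open PowerSeries Cardinal

lemma mem_span_singleton_smul_top_iff {A M : Type*} [CommRing A] [AddCommGroup M] [Module A M]
    {a : A} {m : M} : m ∈ (Ideal.span {a} • ⊤ : Submodule A M) ↔ ∃ m', a • m' = m := by
  simp [Submodule.ideal_span_singleton_smul, Submodule.mem_smul_pointwise_iff_exists]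

variable {R M : Type*} [CommRing R] [AddCommGroup M] [Module R M] [Module R⟦X⟧ M]
  [IsScalarTower R R⟦X⟧ M]

lemma mkQ_span_X_smul (f : R⟦X⟧) (m : M) :
    (Ideal.span {(X : R⟦X⟧)} • ⊤ : Submodule R⟦X⟧ M).mkQ (f • m) =
      constantCoeff f • (Ideal.span {(X : R⟦X⟧)} • ⊤ : Submodule R⟦X⟧ M).mkQ m := by
  obtain ⟨g, hg⟩ : X ∣ f - C (constantCoeff f) := by simp [X_dvd_iff]
  have C_smul : C (constantCoeff f) • m = constantCoeff f • m := by
    rw [← algebraMap_smul R⟦X⟧ (constantCoeff f) m]; rfl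
  rw [← sub_eq_zero, ← LinearMap.map_smul_of_tower, ← C_smul, ← map_sub, ← sub_smul, hg, mul_smul]
  exact (Submodule.Quotient.mk_eq_zero _).mpr (mem_span_singleton_smul_top_iff.mpr ⟨g • m, rfl⟩)

lemma linearIndependent_of_linearIndependent_mkQ_span_X (hX : IsSMulRegular M (X : R⟦X⟧))
    {ι : Type*} {v : ι → M}
    (hv : LinearIndependent R
      ((Ideal.span {(X : R⟦X⟧)} • ⊤ : Submodule R⟦X⟧ M).mkQ ∘ v)) :
    LinearIndependent R⟦X⟧ v := by
  rw [linearIndependent_iff'] at hv ⊢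
  intro s g hg i hi
  ext n
  have constantCoeff_eq_zero {g : ι → R⟦X⟧} (hg : ∑ i ∈ s, g i • v i = 0) :
      ∀ i ∈ s, constantCoeff (g i) = 0 := by
    refine hv s _ ?_
    simp_rw [Function.comp_apply, ← mkQ_span_X_smul, ← map_sum, hg, map_zero]
  induction n generalizing g with
  | zero => simpa using constantCoeff_eq_zero hg i hi
  | succ n ih =>
    have X_dvd (j : ι) : ∃ g', j ∈ s → g j = X * g' := by
      by_cases hj : j ∈ s
      · exact (X_dvd_iff.mpr (constantCoeff_eq_zero hg j hj)).imp fun _ h _ ↦ h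
      · exact ⟨0, fun h ↦ absurd h hj⟩
    choose g' hg' using X_dvd
    rw [hg' i hi, coeff_succ_X_mul]
    refine ih g' (hX.right_eq_zero_of_smul ?_)
    rw [← hg, Finset.smul_sum]
    exact Finset.sum_congr rfl fun j hj ↦ by rw [hg' j hj, mul_smul]

lemma rank_quotient_span_X_le [Nontrivial R] (hX : IsSMulRegular M (X : R⟦X⟧)) :
    Module.rank R (M ⧸ (Ideal.span {(X : R⟦X⟧)} • ⊤ : Submodule R⟦X⟧ M)) ≤
      Module.rank R⟦X⟧ M := by
  rw [Module.rank_def R]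
  refine ciSup_le' fun ⟨s, hs⟩ ↦ ?_
  choose v hv using fun y : s ↦ Submodule.mkQ_surjective _ y.1
  refine LinearIndependent.cardinal_le_rank
    (linearIndependent_of_linearIndependent_mkQ_span_X hX (v := v) ?_)
  rw [Function.comp_def, funext hv]
  exact hs

variable {M₀ : Type*} [AddCommGroup M₀] [Module R M₀]

lemma finiteRankSubmodulesFG_quotient_of_saturated (π : M →ₗ[R] M₀)
    (hπ : ∀ m, π m = 0 ↔ ∃ m', (X : R⟦X⟧) • m' = m) {N : Submodule R⟦X⟧ M}
    (hN : ∀ m, (X : R⟦X⟧) • m ∈ N → m ∈ N) (h : FiniteRankSubmodulesFG R M₀) :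
    FiniteRankSubmodulesFG R (N ⧸ (Ideal.span {(X : R⟦X⟧)} • ⊤ : Submodule R⟦X⟧ N)) := by
  let XN : Submodule R⟦X⟧ N := Ideal.span {(X : R⟦X⟧)} • ⊤
  let πN : N →ₗ[R] M₀ := π ∘ₗ N.subtype.restrictScalars R
  have ker_πN : LinearMap.ker πN = XN.restrictScalars R := by
    ext m
    refine (hπ m).trans (Iff.trans ⟨?_, ?_⟩
      (mem_span_singleton_smul_top_iff (a := (X : R⟦X⟧)) (m := m)).symm)
    · rintro ⟨m', hm'⟩
      exact ⟨⟨m', hN m' (hm' ▸ m.2)⟩, Subtype.ext hm'⟩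
    · rintro ⟨m', rfl⟩
      exact ⟨m', rfl⟩
  refine h.of_injective ((XN.restrictScalars R).liftQ πN ker_πN.ge ∘ₗ
    (Submodule.Quotient.restrictScalarsEquiv R XN).symm.toLinearMap) ?_
  exact (LinearMap.ker_eq_bot.mp (Submodule.ker_liftQ_eq_bot' _ _ ker_πN.symm)).comp
    (LinearEquiv.injective _)

-- The torsion closure of `N` in `M` has the same rank as `N` and is saturated with respect to `X`,
-- so it can be tested modulo `X`.
theorem finiteRankSubmodulesFG_powerSeries [IsDomain R] [IsNoetherianRing R]
    [IsHausdorff (Ideal.span {(X : R⟦X⟧)}) M] (π : M →ₗ[R] M₀)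
    (hπ : ∀ m, π m = 0 ↔ ∃ m', (X : R⟦X⟧) • m' = m) (hX : IsSMulRegular M (X : R⟦X⟧))
    (h : FiniteRankSubmodulesFG R M₀) : FiniteRankSubmodulesFG R⟦X⟧ M := by
  intro N hN
  let N' : Submodule R⟦X⟧ M := (Submodule.torsion R⟦X⟧ (M ⧸ N)).comap N.mkQ
  have hle : N ≤ N' := fun m hm ↦ by simp [N', (Submodule.Quotient.mk_eq_zero N).mpr hm]
  have hsat (m : M) (hm : (X : R⟦X⟧) • m ∈ N') : m ∈ N' := by
    obtain ⟨a, ha⟩ := (Submodule.mem_torsion_iff _).mp hm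
    refine (Submodule.mem_torsion_iff _).mpr
      ⟨a * ⟨X, mem_nonZeroDivisors_of_ne_zero X_ne_zero⟩, ?_⟩
    rw [mul_smul]
    exact ha
  have : IsHausdorff (Ideal.span {(X : R⟦X⟧)}) N' :=
    isHausdorff_of_injective N'.subtype Subtype.val_injective
  have hrank := (rank_quotient_span_X_le (hX.submodule N' X)).trans_lt
    ((rank_comap_torsion_quotient N).trans_lt hN)
  have := (finiteRankSubmodulesFG_quotient_of_saturated π hπ hsat h).finite hrank
  have := Module.Finite.of_restrictScalars_finite R R⟦X⟧
    (N' ⧸ (Ideal.span {(X : R⟦X⟧)} • ⊤ : Submodule R⟦X⟧ N'))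
  have := finite_of_finite_quotient_smul_top (M := N') (Ideal.span {(X : R⟦X⟧)})
  exact (Module.Finite.iff_fg.mp this).of_le hle

end PowerSeriesModules

section FrobeniusPowerSeries

open PowerSeries Cardinal

lemma finiteRankSubmodulesFG_compHom_powerSeries {R B : Type*} [CommRing R] [IsDomain R]
    [IsNoetherianRing R] [CommRing B] (φ : R →+* B) (ψ : R⟦X⟧ →+* B⟦X⟧) {q : ℕ} (hq : 0 < q)
    (hC : ∀ r, ψ (C r) = C (φ r)) (hX : ψ X = X ^ q)
    (h : @FiniteRankSubmodulesFG R B _ _ (Module.compHom B φ)) :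
    @FiniteRankSubmodulesFG R⟦X⟧ B⟦X⟧ _ _ (Module.compHom B⟦X⟧ ψ) := by
  let _ : Module R B := Module.compHom B φ
  let _ : Module R⟦X⟧ B⟦X⟧ := Module.compHom B⟦X⟧ ψ
  have smul_eq (f : R⟦X⟧) (g : B⟦X⟧) : f • g = ψ f * g := rfl
  have smul_eq_C_mul (r : R) (g : B⟦X⟧) : r • g = C (φ r) * g := by
    ext n
    rw [coeff_C_mul]
    rfl
  have : IsScalarTower R R⟦X⟧ B⟦X⟧ := ⟨fun r f g ↦ by
    rw [smul_eq, smul_eq, smul_eq_C_mul, PowerSeries.smul_eq_C_mul, map_mul, hC, mul_assoc]⟩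
  have : IsHausdorff (Ideal.span {(X : R⟦X⟧)}) B⟦X⟧ := by
    refine ⟨fun g hg ↦ PowerSeries.ext fun n ↦ ?_⟩
    have hmem := SModEq.zero.mp (hg (n + 1))
    rw [Ideal.span_singleton_pow, mem_span_singleton_smul_top_iff] at hmem
    obtain ⟨g', rfl⟩ := hmem
    rw [smul_eq, map_pow, hX, ← pow_mul, coeff_X_pow_mul', if_neg, map_zero]
    nlinarith
  let π : B⟦X⟧ →ₗ[R] Fin q → B := LinearMap.pi fun i ↦
    { toFun := coeff i, map_add' := map_add _, map_smul' := fun r g ↦ rfl }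
  refine finiteRankSubmodulesFG_powerSeries π (fun g ↦ ?_) (fun g g' hgg' ↦ ?_)
    (FiniteRankSubmodulesFG.pi h (Fin q))
  · simp_rw [smul_eq, hX, eq_comm (b := g), ← dvd_def, X_pow_dvd_iff, funext_iff]
    exact Fin.forall_iff
  · simp only [smul_eq, hX] at hgg'
    exact X_pow_mul_cancel hgg'

instance expChar_powerSeries (p : ℕ) (S : Type*) [CommRing S] [ExpChar S p] : ExpChar S⟦X⟧ p :=
  expChar_of_injective_ringHom C_injective p

/-- Every submodule of finite rank of `S`, viewed as a module over itself through some power of the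
Frobenius endomorphism, is finitely generated. For an integrally closed domain `S`, this gives the
finiteness of integral closures in finite purely inseparable extensions of the fraction field. -/
def FrobeniusFiniteRankFG (p : ℕ) (S : Type*) [CommRing S] [ExpChar S p] : Prop :=
  ∀ e : ℕ, @FiniteRankSubmodulesFG S S _ _ (Module.compHom S (iterateFrobenius S p e))

namespace FrobeniusFiniteRankFG

lemma of_field (p : ℕ) (k : Type*) [Field k] [ExpChar k p] : FrobeniusFiniteRankFG p k := by
  intro e
  let _ : Module k k := Module.compHom k (iterateFrobenius k p e)
  exact fun N hN ↦ Module.Finite.iff_fg.mp (Module.rank_lt_aleph0_iff.mp hN)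

lemma of_charZero (S : Type*) [CommRing S] [IsNoetherianRing S] [ExpChar S 1] :
    FrobeniusFiniteRankFG 1 S := by
  intro e
  have : Module.compHom S (iterateFrobenius S 1 e) = Semiring.toModule := by
    ext r s
    exact congrArg (· * s) ((iterateFrobenius_def 1 e r).trans (by simp))
  rw [this]
  exact .of_isNoetherian

lemma powerSeries {p : ℕ} {S : Type*} [CommRing S] [IsDomain S] [IsNoetherianRing S] [ExpChar S p]
    (h : FrobeniusFiniteRankFG p S) : FrobeniusFiniteRankFG p S⟦X⟧ := fun e ↦
  finiteRankSubmodulesFG_compHom_powerSeries (iterateFrobenius S p e) _ (expChar_pow_pos S p e)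
    (fun r ↦ by simp only [iterateFrobenius_def, map_pow]) (iterateFrobenius_def p e X) (h e)

theorem finite_integralClosure_of_isPurelyInseparable {p : ℕ} {A : Type*} [CommRing A]
    [IsIntegrallyClosed A] [ExpChar A p] (K L : Type*) [Field K] [Algebra A K] [IsFractionRing A K]
    [Field L] [Algebra A L] [Algebra K L] [IsScalarTower A K L] [FiniteDimensional K L]
    [IsPurelyInseparable K L] (hA : FrobeniusFiniteRankFG p A) :
    Module.Finite A (integralClosure A L) := by
  have : ExpChar K p := expChar_of_injective_ringHom (IsFractionRing.injective A K) p
  let e := IsPurelyInseparable.exponent K L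
  let frob := IsPurelyInseparable.iterateFrobenius K L p (le_refl e)
  have frob_mem (b : integralClosure A L) : ∃ a, algebraMap A K a = frob b := by
    refine IsIntegrallyClosed.algebraMap_eq_of_integral ?_
    rw [← isIntegral_algebraMap_iff (algebraMap K L).injective,
      IsPurelyInseparable.algebraMap_iterateFrobenius]
    exact b.2.pow _
  choose root hroot using frob_mem
  have hinj := IsFractionRing.injective A K
  let _ : Module A A := Module.compHom A (iterateFrobenius A p e)
  let rootLin : integralClosure A L →ₗ[A] A :=
    { toFun := root
      map_add' := fun b c ↦ hinj (by simp [hroot])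
      map_smul' := fun a b ↦ hinj (by
        change _ = algebraMap A K (iterateFrobenius A p e a * root b)
        rw [map_mul, hroot, hroot, iterateFrobenius_def, map_pow,
          ← IsPurelyInseparable.iterateFrobenius_algebraMap L p (le_refl e), ← map_mul,
          ← IsScalarTower.algebraMap_apply]
        exact congrArg frob (Algebra.smul_def a b.1)) }
  have root_injective : Function.Injective rootLin := fun b c hbc ↦
    Subtype.ext (frob.injective (by rw [← hroot, ← hroot]; exact congrArg _ hbc))
  refine ((hA e).of_injective rootLin root_injective).finite ?_
  calc Module.rank A (integralClosure A L) ≤ Module.rank A L :=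
        Submodule.rank_le (integralClosure A L).toSubmodule
    _ = Module.rank K L := (IsLocalization.rank_eq K (nonZeroDivisors A) le_rfl).symm
    _ < ℵ₀ := Module.rank_lt_aleph0 K L

end FrobeniusFiniteRankFG

end FrobeniusPowerSeries

section FiniteExtensions

lemma isPurelyInseparable_fixedField_top {K L : Type*} [Field K] [Field L] [Algebra K L]
    [Normal K L] :
    IsPurelyInseparable K (IntermediateField.fixedField (⊤ : Subgroup (L ≃ₐ[K] L))) := by
  classical
  rw [isPurelyInseparable_iff_natSepDegree_eq_one]
  intro x
  have isIntegral_x : IsIntegral K (x : L) := Algebra.IsIntegral.isIntegral _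
  rw [← minpoly.algebraMap_eq (FaithfulSMul.algebraMap_injective _ L) x,
    Polynomial.natSepDegree_eq_of_splits _ (Normal.splits ‹Normal K L› _), Finset.card_eq_one]
  refine ⟨x, Finset.ext fun y ↦ ?_⟩
  rw [Multiset.mem_toFinset, Polynomial.mem_aroots, Finset.mem_singleton]
  constructor
  · rintro ⟨_, hy⟩
    obtain ⟨σ, rfl⟩ := minpoly.exists_algEquiv_of_root' isIntegral_x.isAlgebraic hy
    exact (IntermediateField.mem_fixedField_iff _ _).mp x.2 σ trivial
  · rintro rfl
    exact ⟨minpoly.ne_zero isIntegral_x, minpoly.aeval _ _⟩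

lemma finite_integralClosure_iff_of_finite (A D L : Type*) [CommRing A] [CommRing D] [CommRing L]
    [Algebra A D] [Algebra D L] [Algebra A L] [IsScalarTower A D L] [Module.Finite A D] :
    Module.Finite A (integralClosure A L) ↔ Module.Finite D (integralClosure D L) := by
  have integralClosure_eq : integralClosure A L = (integralClosure D L).restrictScalars A :=
    Subalgebra.ext fun x ↦ ⟨fun hx ↦ hx.tower_top, fun hx ↦ isIntegral_trans (A := D) x hx⟩
  have : IsScalarTower A D (integralClosure D L) :=
    ⟨fun a d x ↦ Subtype.ext (smul_assoc a d x.1)⟩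
  rw [integralClosure_eq]
  change Module.Finite A (integralClosure D L) ↔ _
  exact ⟨fun _ ↦ .of_restrictScalars_finite A D _, fun _ ↦ .trans D _⟩

namespace FrobeniusFiniteRankFG

variable {p : ℕ} {A : Type*} [CommRing A] [IsDomain A] [IsNoetherianRing A] [IsIntegrallyClosed A]
  [ExpChar A p]

-- `L` is separable over the fixed field of `Gal(L/K)`, which is purely inseparable over `K`.
lemma finite_integralClosure_of_normal (K L : Type*) [Field K] [Algebra A K]
    [IsFractionRing A K] [Field L] [Algebra A L] [Algebra K L] [IsScalarTower A K L]
    [FiniteDimensional K L] [Normal K L] (hA : FrobeniusFiniteRankFG p A) :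
    Module.Finite A (integralClosure A L) := by
  let E := IntermediateField.fixedField (⊤ : Subgroup (L ≃ₐ[K] L))
  let A' := integralClosure A E
  have : IsPurelyInseparable K E := isPurelyInseparable_fixedField_top
  have : IsGalois E L := IsGalois.of_fixed_field L (⊤ : Subgroup (L ≃ₐ[K] L))
  have : Module.Finite A A' := hA.finite_integralClosure_of_isPurelyInseparable K E
  have : IsFractionRing A' E := integralClosure.isFractionRing_of_finite_extension K E
  have : IsIntegrallyClosed A' := integralClosure.isIntegrallyClosedOfFiniteExtension K
  have : IsNoetherianRing A' := IsNoetherianRing.of_finite A A'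
  have : IsScalarTower A E L := .to₁₃₄ A K E L
  have : IsScalarTower A A' L := .to₁₂₄ A A' E L
  exact (finite_integralClosure_iff_of_finite A A' L).mpr
    (IsIntegralClosure.finite A' E L (integralClosure A' L))

theorem finite_integralClosure (K L : Type*) [Field K] [Algebra A K]
    [IsFractionRing A K] [Field L] [Algebra A L] [Algebra K L] [IsScalarTower A K L]
    [FiniteDimensional K L] (hA : FrobeniusFiniteRankFG p A) :
    Module.Finite A (integralClosure A L) := by
  let L' := IntermediateField.normalClosure K L (AlgebraicClosure L)
  have : Normal K (AlgebraicClosure L) := normal_iff.mpr fun x ↦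
    ⟨((Algebra.IsAlgebraic.trans K L (AlgebraicClosure L)).isAlgebraic x).isIntegral,
      IsAlgClosed.splits _⟩
  have : IsScalarTower A L L' := .to₁₃₄ A K L L'
  have := hA.finite_integralClosure_of_normal K L'
  let f := (IsScalarTower.toAlgHom A L L').mapIntegralClosure
  refine Module.Finite.of_injective f.toLinearMap fun x y hxy ↦ Subtype.ext ?_
  exact (algebraMap L L').injective (congrArg Subtype.val hxy)

theorem finite_integralClosure_fractionRing {D : Type*} [CommRing D] [IsDomain D]
    [Algebra A D] [Module.Finite A D] [FaithfulSMul A D] (hA : FrobeniusFiniteRankFG p A) :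
    Module.Finite D (integralClosure D (FractionRing D)) := by
  let K := FractionRing A
  let L := FractionRing D
  have : FaithfulSMul A L := .trans A D L
  let _ : Algebra K L := FractionRing.liftAlgebra A L
  have : FiniteDimensional K L := Module.Finite.of_isLocalization A D (nonZeroDivisors A)
  exact (finite_integralClosure_iff_of_finite A D L).mp (hA.finite_integralClosure K L)

end FrobeniusFiniteRankFG

end FiniteExtensions

section NoetherNormalization

lemma ringKrullDim_powerSeries_le (S : Type*) [CommRing S] [IsLocalRing S] [IsNoetherianRing S] :
    ringKrullDim (PowerSeries S) ≤ ringKrullDim S + 1 := by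
  have mk_comp_C_surjective : Function.Surjective
      ((Ideal.Quotient.mk (Ideal.span {(PowerSeries.X : PowerSeries S)})).comp PowerSeries.C) := by
    rintro ⟨f⟩
    refine ⟨PowerSeries.constantCoeff f, (Ideal.Quotient.eq.mpr ?_).symm⟩
    rw [Ideal.mem_span_singleton, PowerSeries.X_dvd_iff]
    simp
  have X_mem : PowerSeries.X ∈ Ring.jacobson (PowerSeries S) := by
    rw [IsLocalRing.ringJacobson_eq_maximalIdeal, mem_maximalIdeal, mem_nonunits_iff,
      PowerSeries.isUnit_iff_constantCoeff]
    simp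
  have h := ringKrullDim_le_ringKrullDim_quotient_add_card {(PowerSeries.X : PowerSeries S)}
    (by simpa using X_mem)
  rw [Finset.coe_singleton, Finset.card_singleton, Nat.cast_one] at h
  exact h.trans (by gcongr; exact ringKrullDim_le_of_surjective _ mk_comp_C_surjective)

lemma ringKrullDim_le_of_isIntegral (A D : Type*) [CommRing A] [CommRing D] [Algebra A D]
    [Algebra.IsIntegral A D] : ringKrullDim D ≤ ringKrullDim A :=
  Order.krullDim_le_of_strictMono (PrimeSpectrum.comap (algebraMap A D))
    fun _ _ ↦ Ideal.IsIntegral.comap_lt_comap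

-- A nonzero kernel would drop the dimension of the image below that of `D`.
lemma injective_of_finite_of_ringKrullDim_le {A D : Type*} [CommRing A] [IsDomain A] [CommRing D]
    {f : A →+* D} (hf : f.Finite) {d : ℕ} (hA : ringKrullDim A ≤ d) (hD : d ≤ ringKrullDim D) :
    Function.Injective f := by
  refine (injective_iff_map_eq_zero f).mpr fun a ha ↦ ?_
  by_contra ha_ne
  let g : A ⧸ Ideal.span {a} →+* D := Ideal.Quotient.lift _ f fun x hx ↦ by
    obtain ⟨y, rfl⟩ := Ideal.mem_span_singleton.mp hx
    rw [map_mul, ha, zero_mul]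
  have hg : g.Finite := .of_comp_finite (f := Ideal.Quotient.mk (Ideal.span {a})) hf
  algebraize [g]
  have hlt : (d : WithBot ℕ∞) + 1 ≤ d := calc
    (d : WithBot ℕ∞) + 1 ≤ ringKrullDim (A ⧸ Ideal.span {a}) + 1 := by
      gcongr
      exact hD.trans (ringKrullDim_le_of_isIntegral _ D)
    _ ≤ d := (ringKrullDim_quotient_succ_le_of_nonZeroDivisor
      (mem_nonZeroDivisors_of_ne_zero ha_ne)).trans hA
  exact absurd (by exact_mod_cast hlt) (Nat.not_succ_le_self d)

/-- The properties of a coefficient ring `S` of exponential characteristic `p` and dimension at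
most `d` that pass to power series rings over `S` and make every domain that is finite over such a
power series ring have a finite integral closure. -/
structure NormalizationBase (p d : ℕ) (S : Type*) [CommRing S] [ExpChar S p] : Prop where
  isDomain : IsDomain S
  isNoetherianRing : IsNoetherianRing S
  isIntegrallyClosed : IsIntegrallyClosed S
  isLocalRing : IsLocalRing S
  ringKrullDim_le : ringKrullDim S ≤ d
  frobeniusFiniteRankFG : FrobeniusFiniteRankFG p S

namespace NormalizationBase

lemma of_field (p : ℕ) (k : Type*) [Field k] [ExpChar k p] : NormalizationBase p 0 k where
  isDomain := inferInstance
  isNoetherianRing := inferInstance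
  isIntegrallyClosed := inferInstance
  isLocalRing := inferInstance
  ringKrullDim_le := (ringKrullDim_eq_zero_of_field k).le
  frobeniusFiniteRankFG := .of_field p k

lemma of_isDiscreteValuationRing (C : Type*) [CommRing C] [IsDomain C] [IsDiscreteValuationRing C]
    [ExpChar C 1] : NormalizationBase 1 1 C where
  isDomain := inferInstance
  isNoetherianRing := inferInstance
  isIntegrallyClosed := inferInstance
  isLocalRing := inferInstance
  ringKrullDim_le := Ring.krullDimLE_iff.mp inferInstance
  frobeniusFiniteRankFG := .of_charZero C

universe u

lemma powerSeries {p d : ℕ} {S : Type u} [CommRing S] [ExpChar S p]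
    (h : NormalizationBase p d S) : NormalizationBase p (d + 1) (PowerSeries S) where
  isDomain := have := h.isDomain; inferInstance
  isNoetherianRing := have := h.isNoetherianRing; inferInstance
  isIntegrallyClosed :=
    have := h.isDomain
    have := h.isNoetherianRing
    have := h.isIntegrallyClosed
    inferInstance
  isLocalRing := have := h.isLocalRing; inferInstance
  ringKrullDim_le := by
    have := h.isLocalRing
    have := h.isNoetherianRing
    refine (ringKrullDim_powerSeries_le S).trans ?_
    push_cast
    gcongr
    exact h.ringKrullDim_le
  frobeniusFiniteRankFG :=
    have := h.isDomain
    have := h.isNoetherianRing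
    h.frobeniusFiniteRankFG.powerSeries

lemma exists_ringEquiv_mvPowerSeries {p d : ℕ} {S : Type u} [CommRing S] [ExpChar S p]
    (h : NormalizationBase p d S) (n : ℕ) :
    ∃ (A : Type u) (_ : CommRing A) (_ : ExpChar A p),
      NormalizationBase p (d + n) A ∧ Nonempty (A ≃+* MvPowerSeries (Fin n) S) := by
  induction n with
  | zero => exact ⟨S, _, _, h, ⟨(MvPowerSeries.isEmptyEquiv (Fin 0) S).symm.toRingEquiv⟩⟩
  | succ n ih =>
    obtain ⟨A, _, _, hA, ⟨e⟩⟩ := ih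
    have map_bijective : Function.Bijective (PowerSeries.map e.toRingHom) :=
      ⟨PowerSeries.map_injective _ e.injective, PowerSeries.map_surjective _ e.surjective⟩
    exact ⟨PowerSeries A, _, inferInstance, hA.powerSeries,
      ⟨(RingEquiv.ofBijective _ map_bijective).trans
        (MvPowerSeries.finSuccEquiv S n).symm.toRingEquiv⟩⟩

theorem finite_integralClosure_fractionRing {p d : ℕ} {S D : Type*} [CommRing S] [ExpChar S p]
    [CommRing D] [IsDomain D] (h : NormalizationBase p d S) {n : ℕ}
    {g : MvPowerSeries (Fin n) S →+* D} (hg : g.Finite) (hD : (d + n : ℕ) ≤ ringKrullDim D) :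
    Module.Finite D (integralClosure D (FractionRing D)) := by
  obtain ⟨A, _, _, hA, ⟨e⟩⟩ := h.exists_ringEquiv_mvPowerSeries n
  have := hA.isDomain
  have := hA.isNoetherianRing
  have := hA.isIntegrallyClosed
  let f : A →+* D := g.comp e.toRingHom
  have f_finite : f.Finite := hg.comp (.of_surjective _ e.surjective)
  have f_injective := injective_of_finite_of_ringKrullDim_le f_finite hA.ringKrullDim_le hD
  algebraize [f]
  have : FaithfulSMul A D := (faithfulSMul_iff_algebraMap_injective A D).mpr f_injective
  exact hA.frobeniusFiniteRankFG.finite_integralClosure_fractionRing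

end NormalizationBase

end NoetherNormalization

section AdicCompleteness

lemma isPrecomplete_of_surjective {A M N : Type*} [CommRing A] [AddCommGroup M] [Module A M]
    [AddCommGroup N] [Module A N] (I : Ideal A) [IsPrecomplete I M] {f : M →ₗ[A] N}
    (hf : Function.Surjective f) : IsPrecomplete I N := by
  rw [← AdicCompletion.of_surjective_iff]
  have comp_surjective := (AdicCompletion.map_surjective I hf).comp
    (AdicCompletion.of_surjective I M)
  refine Function.Surjective.of_comp (g := f) ?_
  convert comp_surjective using 1
  ext m
  simp

lemma isAdicComplete_map_of_surjective {B E : Type*} [CommRing B] [IsNoetherianRing B]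
    [CommRing E] (I : Ideal B) [IsAdicComplete I B] (f : B →+* E) (hf : Function.Surjective f) :
    IsAdicComplete (I.map f) E := by
  algebraize [f]
  have : Module.Finite B E := .of_surjective (Algebra.linearMap B E) hf
  have : IsPrecomplete I E := isPrecomplete_of_surjective I (f := Algebra.linearMap B E) hf
  have : IsHausdorff I E := .of_le_jacobson I E (IsAdicComplete.le_jacobson_bot I)
  exact (IsAdicComplete.map_algebraMap_iff I E).mpr {}

lemma isAdicComplete_of_le {A : Type*} [CommRing A] [IsNoetherianRing A] {I J : Ideal A}
    [IsAdicComplete I A] (h : J ≤ I) : IsAdicComplete J A := by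
  have : IsHausdorff J A := .of_le_jacobson J A (h.trans (IsAdicComplete.le_jacobson_bot I))
  have pow_smul_le (n : ℕ) : (J ^ n • ⊤ : Submodule A A) ≤ I ^ n • ⊤ :=
    Submodule.smul_mono_left (Ideal.pow_right_mono h n)
  refine { prec' := fun f hf ↦ ?_ }
  obtain ⟨L, hL⟩ := IsPrecomplete.prec (I := I) inferInstance
    fun hmn ↦ (hf hmn).mono (pow_smul_le _)
  refine ⟨L, fun n ↦ SModEq.sub_mem.mpr ?_⟩
  -- `J ^ n` is `I`-adically closed, and `f n - L` is `I`-adically close to `f n - f N ∈ J ^ n`.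
  have : IsHausdorff I (A ⧸ (J ^ n • ⊤ : Submodule A A)) :=
    .of_le_jacobson I _ (IsAdicComplete.le_jacobson_bot I)
  rw [← Submodule.Quotient.mk_eq_zero]
  refine IsHausdorff.haus this _ fun m ↦ SModEq.zero.mpr ?_
  have mk_eq : Submodule.Quotient.mk (f n - L) =
      (J ^ n • ⊤ : Submodule A A).mkQ (f (max m n) - L) := by
    rw [Submodule.mkQ_apply, Submodule.Quotient.eq, sub_sub_sub_cancel_right]
    exact SModEq.sub_mem.mp (hf (le_max_right m n))
  have sub_mem : f (max m n) - L ∈ (I ^ m • ⊤ : Submodule A A) :=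
    Submodule.smul_mono_left (Ideal.pow_le_pow_right (le_max_left m n))
      (SModEq.sub_mem.mp (hL (max m n)))
  rw [mk_eq]
  exact Submodule.smul_top_le_comap_smul_top _ _ sub_mem

lemma isAdicComplete_of_isNilpotent {A : Type*} [CommRing A] {I : Ideal A} (hI : IsNilpotent I) :
    IsAdicComplete I A := by
  obtain ⟨N, hN⟩ := hI
  have eq_of_smodEq {x y : A} (h : x ≡ y [SMOD (I ^ N • ⊤ : Submodule A A)]) : x = y := by
    rwa [hN, Ideal.zero_eq_bot, Submodule.bot_smul, SModEq.bot] at h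
  refine { haus' := fun x hx ↦ eq_of_smodEq (hx N), prec' := fun f hf ↦ ⟨f N, fun n ↦ ?_⟩ }
  obtain hn | hn := le_total n N
  · exact hf hn
  · rw [eq_of_smodEq (hf hn)]

end AdicCompleteness

section Sections

variable {B k : Type*} [CommRing B] [Field k]

theorem exists_ringHom_section_of_perfectField (F : Type*) [Field F] [PerfectField F] [Algebra F B]
    (g : B →+* k) (hg : Function.Surjective g) [IsAdicComplete (RingHom.ker g) B] :
    ∃ s : k →+* B, ∀ t, g (s t) = t := by
  let _ : Algebra F k := (g.comp (algebraMap F B)).toAlgebra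
  let g' : B →ₐ[F] k := { g with commutes' := fun _ ↦ rfl }
  have : Algebra.FormallySmooth F k := formallySmooth_of_perfectField F k
  have : IsAdicComplete (RingHom.ker g') B := ‹IsAdicComplete (RingHom.ker g) B›
  let e := Ideal.quotientKerAlgEquivOfSurjective (f := g') hg
  obtain ⟨s, hs⟩ :=
    Algebra.FormallySmooth.exists_mkₐ_comp_eq_of_isAdicComplete e.symm.toAlgHom
  exact ⟨s, fun t ↦ e.symm.injective ((e.symm_apply_apply _).trans (AlgHom.congr_fun hs t))⟩

lemma exists_ringHom_section_of_natCast_eq_zero (p : ℕ) [Fact p.Prime] (hp : (p : B) = 0)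
    (g : B →+* k) (hg : Function.Surjective g) [IsAdicComplete (RingHom.ker g) B] :
    ∃ s : k →+* B, ∀ t, g (s t) = t := by
  have : Nontrivial B := g.domain_nontrivial
  have : CharP B p := (CharP.charP_iff_prime_eq_zero Fact.out).mpr hp
  let _ : Algebra (ZMod p) B := ZMod.algebra B p
  exact exists_ringHom_section_of_perfectField (ZMod p) g hg

end Sections

lemma exists_forall_pow_dvd_sub {A : Type*} [CommRing A] {a : A} [IsPrecomplete (Ideal.span {a}) A]
    {f : ℕ → A} (hf : ∀ n, a ^ n ∣ f n - f (n + 1)) : ∃ L, ∀ n, a ^ n ∣ f n - L := by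
  have smodEq_iff (n : ℕ) (x y : A) :
      x ≡ y [SMOD (Ideal.span {a} ^ n • ⊤ : Submodule A A)] ↔ a ^ n ∣ x - y := by
    rw [SModEq.sub_mem, smul_eq_mul, Ideal.mul_top, Ideal.span_singleton_pow,
      Ideal.mem_span_singleton]
  simp only [← smodEq_iff] at hf ⊢
  exact IsPrecomplete.prec inferInstance fun hmn ↦
    (AdicCompletion.isAdicCauchy_iff _ _ f).mpr hf hmn

lemma isAdicComplete_subring_of_saturated {D : Type*} [CommRing D] {C : Subring D} {π : C}
    [IsAdicComplete (Ideal.span {(π : D)}) D] (hsat : ∀ a : D, π * a ∈ C → a ∈ C)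
    (hclosed : ∀ x, (∀ n : ℕ, ∃ c ∈ C, (π : D) ^ n ∣ c - x) → x ∈ C) :
    IsAdicComplete (Ideal.span {π}) C := by
  have mem_of_pow_mul_mem (n : ℕ) (a : D) (ha : (π : D) ^ n * a ∈ C) : a ∈ C := by
    induction n with
    | zero => simpa using ha
    | succ n ih => exact ih (hsat _ (by rwa [← mul_assoc, ← pow_succ']))
  have pow_dvd_iff (n : ℕ) (x : C) : π ^ n ∣ x ↔ (π : D) ^ n ∣ x := by
    refine ⟨fun h ↦ by simpa using map_dvd C.subtype h, ?_⟩
    rintro ⟨d, hd⟩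
    exact ⟨⟨d, mem_of_pow_mul_mem n d (hd ▸ x.2)⟩, Subtype.ext (by simpa using hd)⟩
  have smodEq_iff (n : ℕ) (x y : C) :
      x ≡ y [SMOD (Ideal.span {π} ^ n • ⊤ : Submodule C C)] ↔ (π : D) ^ n ∣ x - y := by
    rw [SModEq.sub_mem, smul_eq_mul, Ideal.mul_top, Ideal.span_singleton_pow,
      Ideal.mem_span_singleton, pow_dvd_iff, AddSubgroupClass.coe_sub]
  have : IsHausdorff (Ideal.span {π}) C := by
    have : IsHausdorff (Ideal.span {π}) D := by
      rw [← IsHausdorff.map_algebraMap_iff (S := D), Ideal.map_span, Set.image_singleton]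
      exact inferInstanceAs (IsHausdorff (Ideal.span {(π : D)}) D)
    exact isHausdorff_of_injective (Algebra.linearMap C D) Subtype.val_injective
  refine { prec' := fun f hf ↦ ?_ }
  simp only [smodEq_iff] at hf
  obtain ⟨L, hL⟩ := exists_forall_pow_dvd_sub fun n ↦ hf n.le_succ
  exact ⟨⟨L, hclosed L fun n ↦ ⟨f n, (f n).2, hL n⟩⟩, fun n ↦ (smodEq_iff n _ _).mpr (hL n)⟩

section CoefficientSubring

variable {D k : Type*} [CommRing D] [Field k] {p : ℕ} {ρ : D →+* k}

/-- The ideal `pF + (p ^ n D ∩ F)` of a subring `F` of `D`. -/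
def natCastSupPowIdeal (p n : ℕ) (F : Subring D) : Ideal F :=
  Ideal.span {(p : F)} ⊔ (Ideal.span {(p : D) ^ n}).comap F.subtype

/-- `F` is the preimage of a subring of `D / p ^ n D` that `ρ` maps onto `k` with kernel generated
by `p`, as a coefficient subring of `D` would be. A coefficient subring is then obtained as the
intersection of a decreasing sequence of such `F` for growing `n`. -/
structure IsCoefficientSubringMod (p : ℕ) (ρ : D →+* k) (n : ℕ) (F : Subring D) : Prop where
  pow_mul_mem : ∀ d, (p : D) ^ n * d ∈ F
  exists_map_eq : ∀ t, ∃ x ∈ F, ρ x = t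
  exists_eq_add : ∀ x ∈ F, ρ x = 0 → ∃ f ∈ F, ∃ d, x = p * f + p ^ n * d

lemma map_eq_zero_of_mem_natCastSupPowIdeal (hρ : ρ p = 0) {n : ℕ} {F : Subring D} {x : F}
    (hx : x ∈ natCastSupPowIdeal p (n + 1) F) : ρ x = 0 := by
  suffices h : natCastSupPowIdeal p (n + 1) F ≤ RingHom.ker (ρ.comp F.subtype) from h hx
  refine sup_le ((Ideal.span_singleton_le_iff_mem _).mpr ?_) fun y hy ↦ ?_
  · simpa [RingHom.mem_ker] using hρ
  obtain ⟨d, hd⟩ := Ideal.mem_span_singleton.mp hy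
  rw [RingHom.mem_ker, RingHom.comp_apply, hd, map_mul, map_pow, hρ, zero_pow n.succ_ne_zero,
    zero_mul]

/-- The map `F / (pF + p ^ (n + 1) D ∩ F) → k` induced by `ρ`; its sections produce coefficient
subrings modulo `p ^ (n + 1)` contained in `F`. -/
def quotientNatCastSupPowIdealHom (hρ : ρ p = 0) (n : ℕ) (F : Subring D) :
    F ⧸ natCastSupPowIdeal p (n + 1) F →+* k :=
  Ideal.Quotient.lift _ (ρ.comp F.subtype) fun _ ↦ map_eq_zero_of_mem_natCastSupPowIdeal hρ

namespace IsCoefficientSubringMod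

variable {n : ℕ} {F : Subring D}

lemma pow_succ_mul_mem (h : IsCoefficientSubringMod p ρ n F) (d : D) :
    (p : D) ^ (n + 1) * d ∈ F := by
  rw [pow_succ, mul_assoc]
  exact h.pow_mul_mem _

lemma mem_of_pow_dvd_sub (h : IsCoefficientSubringMod p ρ n F) {x y : D} (hx : x ∈ F)
    (hxy : (p : D) ^ n ∣ x - y) : y ∈ F := by
  obtain ⟨d, hd⟩ := hxy
  rw [← sub_sub_cancel x y, hd]
  exact F.sub_mem hx (h.pow_mul_mem d)

lemma mem_natCastSupPowIdeal_iff (h : IsCoefficientSubringMod p ρ n F) {x : F} :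
    x ∈ natCastSupPowIdeal p (n + 1) F ↔ ∃ f ∈ F, ∃ d, (x : D) = p * f + p ^ (n + 1) * d := by
  simp only [natCastSupPowIdeal, Submodule.mem_sup, Ideal.mem_span_singleton, Ideal.mem_comap]
  constructor
  · rintro ⟨_, ⟨f, rfl⟩, z, ⟨d, hd⟩, rfl⟩
    exact ⟨f, f.2, d, by simpa using hd⟩
  · rintro ⟨f, hf, d, hx⟩
    exact ⟨p * ⟨f, hf⟩, ⟨_, rfl⟩, ⟨_, h.pow_succ_mul_mem d⟩, ⟨d, rfl⟩, Subtype.ext hx.symm⟩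

lemma quotientHom_surjective (h : IsCoefficientSubringMod p ρ n F) (hρ : ρ p = 0) :
    Function.Surjective (quotientNatCastSupPowIdealHom hρ n F) := fun t ↦
  have ⟨x, hx, hxt⟩ := h.exists_map_eq t
  ⟨Ideal.Quotient.mk _ ⟨x, hx⟩, hxt⟩

-- The subring is the preimage in `F` of the image of the section.
lemma exists_succ_of_section (h : IsCoefficientSubringMod p ρ n F) (hρ : ρ p = 0)
    {s : k →+* F ⧸ natCastSupPowIdeal p (n + 1) F}
    (hs : ∀ t, quotientNatCastSupPowIdealHom hρ n F (s t) = t) :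
    ∃ F' ≤ F, IsCoefficientSubringMod p ρ (n + 1) F' ∧
      ∀ x ∈ F, ∃ x' ∈ F', ρ x' = ρ x ∧ (p : D) ^ n ∣ x - x' := by
  let F' := (s.range.comap (Ideal.Quotient.mk _)).map F.subtype
  have F'_le : F' ≤ F := by
    rintro _ ⟨x, -, rfl⟩
    exact x.2
  have mem_of_eq_add {x f d : D} (hf : f ∈ F) (hx : x = p * f + p ^ (n + 1) * d) : x ∈ F' := by
    have hxF : x ∈ F :=
      hx ▸ F.add_mem (F.mul_mem (natCast_mem F p) hf) (h.pow_succ_mul_mem d)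
    refine ⟨⟨x, hxF⟩, ⟨0, ?_⟩, rfl⟩
    rw [map_zero, eq_comm, Ideal.Quotient.eq_zero_iff_mem]
    exact h.mem_natCastSupPowIdeal_iff.mpr ⟨f, hf, d, hx⟩
  have exists_map_eq (t : k) : ∃ x ∈ F', ρ x = t := by
    obtain ⟨x, hx⟩ := Ideal.Quotient.mk_surjective (s t)
    exact ⟨x, ⟨x, ⟨t, hx.symm⟩, rfl⟩, (congrArg _ hx).trans (hs t)⟩
  have exists_approx (x : D) (hx : x ∈ F) :
      ∃ x' ∈ F', ρ x' = ρ x ∧ (p : D) ^ n ∣ x - x' := by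
    obtain ⟨y, hy, hyx⟩ := exists_map_eq (ρ x)
    obtain ⟨f, hf, d, hd⟩ := h.exists_eq_add (x - y) (F.sub_mem hx (F'_le hy)) (by simp [hyx])
    refine ⟨y + p * f, F'.add_mem hy (mem_of_eq_add (d := 0) hf (by simp)), ?_, d, ?_⟩
    · rw [map_add, map_mul, hρ, zero_mul, add_zero, hyx]
    linear_combination hd
  refine ⟨F', F'_le, ⟨fun d ↦ ?_, exists_map_eq, ?_⟩, exists_approx⟩
  · exact mem_of_eq_add F.zero_mem (by rw [mul_zero, zero_add])
  · rintro _ ⟨x, ⟨t, ht⟩, rfl⟩ hx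
    have t_eq_zero : t = 0 := by rw [← hs t, ht]; exact hx
    rw [t_eq_zero, map_zero, eq_comm, Ideal.Quotient.eq_zero_iff_mem,
      h.mem_natCastSupPowIdeal_iff] at ht
    obtain ⟨f, hf, d, hd⟩ := ht
    obtain ⟨f', hf', -, d', hd'⟩ := exists_approx f hf
    exact ⟨f', hf', d' + d, hd.trans (by linear_combination (p : D) * hd')⟩

lemma isNilpotent_ker_quotientHom (h : IsCoefficientSubringMod p ρ (n + 1) F) (hρ : ρ p = 0) :
    IsNilpotent (RingHom.ker (quotientNatCastSupPowIdealHom hρ (n + 1) F)) := by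
  let K := RingHom.ker (quotientNatCastSupPowIdealHom hρ (n + 1) F)
  suffices mul_le : K * K ≤ ⊥ from ⟨2, (pow_two K).trans (le_bot_iff.mp mul_le)⟩
  rw [Ideal.mul_le]
  rintro ⟨a⟩ ha ⟨b⟩ hb
  obtain ⟨f, hf, d, hfd⟩ := h.exists_eq_add a a.2 ha
  obtain ⟨f', -, d', hfd'⟩ := h.exists_eq_add b b.2 hb
  refine Ideal.Quotient.eq_zero_iff_mem.mpr (h.mem_natCastSupPowIdeal_iff.mpr
    ⟨f * b, F.mul_mem hf b.2, d * f' + p ^ n * (d * d'), ?_⟩)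
  rw [Subring.coe_mul, hfd, hfd']
  ring

lemma isAdicComplete_ker_quotientHom [IsNoetherianRing D] [IsAdicComplete (RingHom.ker ρ) D]
    (h : IsCoefficientSubringMod p ρ n F) (hρ : ρ p = 0) :
    IsAdicComplete (RingHom.ker (quotientNatCastSupPowIdealHom hρ n F))
      (F ⧸ natCastSupPowIdeal p (n + 1) F) := by
  cases n with
  | zero =>
    let f : D →+* F := (RingHom.id D).codRestrict F fun d ↦ by simpa using h.pow_mul_mem d
    let g := (Ideal.Quotient.mk (natCastSupPowIdeal p (0 + 1) F)).comp f
    have g_surjective : Function.Surjective g :=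
      Ideal.Quotient.mk_surjective.comp fun x ↦ ⟨x, rfl⟩
    have comap_ker : (RingHom.ker (quotientNatCastSupPowIdealHom hρ 0 F)).comap g =
        RingHom.ker ρ := RingHom.comap_ker _ _
    rw [← Ideal.map_comap_of_surjective g g_surjective (RingHom.ker _), comap_ker]
    exact isAdicComplete_map_of_surjective (RingHom.ker ρ) g g_surjective
  | succ n => exact isAdicComplete_of_isNilpotent (h.isNilpotent_ker_quotientHom hρ)

lemma exists_succ [Fact p.Prime] [IsNoetherianRing D] [IsAdicComplete (RingHom.ker ρ) D]
    (h : IsCoefficientSubringMod p ρ n F) (hρ : ρ p = 0) :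
    ∃ F' ≤ F, IsCoefficientSubringMod p ρ (n + 1) F' ∧
      ∀ x ∈ F, ∃ x' ∈ F', ρ x' = ρ x ∧ (p : D) ^ n ∣ x - x' := by
  have natCast_eq_zero : (p : F ⧸ natCastSupPowIdeal p (n + 1) F) = 0 := by
    rw [← map_natCast (Ideal.Quotient.mk _), Ideal.Quotient.eq_zero_iff_mem]
    exact Ideal.mem_sup_left (Ideal.mem_span_singleton_self _)
  have := h.isAdicComplete_ker_quotientHom hρ
  obtain ⟨s, hs⟩ := exists_ringHom_section_of_natCast_eq_zero p natCast_eq_zero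
    (quotientNatCastSupPowIdealHom hρ n F) (h.quotientHom_surjective hρ)
  exact h.exists_succ_of_section hρ hs

end IsCoefficientSubringMod

lemma exists_antitone_isCoefficientSubringMod [Fact p.Prime] [IsNoetherianRing D]
    [IsAdicComplete (RingHom.ker ρ) D] (hsurj : Function.Surjective ρ) (hρ : ρ p = 0) :
    ∃ G : ℕ → Subring D, Antitone G ∧ (∀ n, IsCoefficientSubringMod p ρ n (G n)) ∧
      ∀ n, ∀ x ∈ G n, ∃ x' ∈ G (n + 1), ρ x' = ρ x ∧ (p : D) ^ n ∣ x - x' := by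
  have top : IsCoefficientSubringMod p ρ 0 ⊤ :=
    ⟨fun _ ↦ trivial, fun t ↦ (hsurj t).imp fun _ ↦ And.intro trivial,
      fun x _ _ ↦ ⟨0, trivial, x, by simp⟩⟩
  choose next next_le next_mod next_approx using
    fun (n : ℕ) (F : {F : Subring D // IsCoefficientSubringMod p ρ n F}) ↦ F.2.exists_succ hρ
  let G (n : ℕ) : {F : Subring D // IsCoefficientSubringMod p ρ n F} :=
    n.rec ⟨⊤, top⟩ fun n F ↦ ⟨next n F, next_mod n F⟩
  exact ⟨fun n ↦ (G n).1, antitone_nat_of_succ_le fun n ↦ next_le n (G n), fun n ↦ (G n).2,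
    fun n ↦ next_approx n (G n)⟩

variable {G : ℕ → Subring D}

lemma exists_mem_iInf_map_eq [IsPrecomplete (Ideal.span {(p : D)}) D] (hρ : ρ p = 0)
    (hmod : ∀ n, IsCoefficientSubringMod p ρ n (G n))
    (happrox : ∀ n, ∀ x ∈ G n, ∃ x' ∈ G (n + 1), ρ x' = ρ x ∧ (p : D) ^ n ∣ x - x') (t : k) :
    ∃ x ∈ ⨅ n, G n, ρ x = t := by
  choose! next next_mem map_next next_dvd using happrox
  obtain ⟨x, hx, hxt⟩ := (hmod 0).exists_map_eq t
  let c (n : ℕ) : D := n.rec x next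
  have hc (n : ℕ) : c n ∈ G n ∧ ρ (c n) = t := by
    induction n with
    | zero => exact ⟨hx, hxt⟩
    | succ n ih => exact ⟨next_mem n _ ih.1, (map_next n _ ih.1).trans ih.2⟩
  obtain ⟨L, hL⟩ := exists_forall_pow_dvd_sub fun n ↦ next_dvd n (c n) (hc n).1
  refine ⟨L, Subring.mem_iInf.mpr fun n ↦ (hmod n).mem_of_pow_dvd_sub (hc n).1 (hL n), ?_⟩
  obtain ⟨d, hd⟩ := hL 1
  rw [← (hc 1).2, eq_comm, ← sub_eq_zero, ← map_sub, show c 1 - L = _ from hd, pow_one, map_mul, hρ,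
    zero_mul]

lemma exists_mem_iInf_eq_natCast_mul (hp : IsLeftRegular (p : D)) (hG : Antitone G)
    (hmod : ∀ n, IsCoefficientSubringMod p ρ n (G n)) {x : D} (hx : x ∈ ⨅ n, G n)
    (hρx : ρ x = 0) : ∃ y ∈ ⨅ n, G n, x = p * y := by
  have decomp (n : ℕ) : ∃ f ∈ G n, ∃ d, x = p * f + p ^ n * d :=
    (hmod n).exists_eq_add x (Subring.mem_iInf.mp hx n) hρx
  obtain ⟨f₁, -, d₁, hx₁⟩ := decomp 1
  have hy : x = p * (f₁ + d₁) := by rw [hx₁]; ring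
  refine ⟨f₁ + d₁, Subring.mem_iInf.mpr fun n ↦ ?_, hy⟩
  obtain ⟨f, hf, d, hfd⟩ := decomp (n + 1)
  have y_eq : f₁ + d₁ = f + p ^ n * d := hp (by linear_combination hfd - hy)
  rw [y_eq]
  exact (G n).add_mem (hG n.le_succ hf) ((hmod n).pow_mul_mem d)

lemma exists_coefficientSubring [Fact p.Prime] [IsNoetherianRing D]
    [IsAdicComplete (RingHom.ker ρ) D] (hsurj : Function.Surjective ρ) (hρ : ρ p = 0)
    (hp : IsLeftRegular (p : D)) :
    ∃ C : Subring D, Function.Surjective (ρ.comp C.subtype) ∧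
      RingHom.ker (ρ.comp C.subtype) = Ideal.span {(p : C)} ∧
      IsAdicComplete (Ideal.span {(p : C)}) C := by
  have : IsAdicComplete (Ideal.span {(p : D)}) D :=
    isAdicComplete_of_le (I := RingHom.ker ρ) ((Ideal.span_singleton_le_iff_mem _).mpr hρ)
  obtain ⟨G, hG, hmod, happrox⟩ := exists_antitone_isCoefficientSubringMod hsurj hρ
  have sat {x : D} : x ∈ ⨅ n, G n → ρ x = 0 → ∃ y ∈ ⨅ n, G n, x = p * y :=
    exists_mem_iInf_eq_natCast_mul hp hG hmod
  refine ⟨⨅ n, G n, fun t ↦ ?_, le_antisymm (fun x hx ↦ ?_) ?_, ?_⟩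
  · obtain ⟨x, hx, hxt⟩ := exists_mem_iInf_map_eq hρ hmod happrox t
    exact ⟨⟨x, hx⟩, hxt⟩
  · obtain ⟨y, hy, hxy⟩ := sat x.2 hx
    exact Ideal.mem_span_singleton.mpr ⟨⟨y, hy⟩, Subtype.ext (by simpa using hxy)⟩
  · rw [Ideal.span_singleton_le_iff_mem, RingHom.mem_ker, map_natCast, ← map_natCast ρ, hρ]
  · refine isAdicComplete_subring_of_saturated (π := p) (fun a ha ↦ ?_) fun x hx ↦ ?_
    · obtain ⟨y, hy, hay⟩ := sat ha (by simp [hρ])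
      rwa [hp hay]
    · refine Subring.mem_iInf.mpr fun n ↦ ?_
      obtain ⟨c, hc, hcx⟩ := hx n
      exact (hmod n).mem_of_pow_dvd_sub (Subring.mem_iInf.mp hc n) hcx

end CoefficientSubring

lemma isDiscreteValuationRing_of_ker_eq_span {C k : Type*} [CommRing C] [IsDomain C] [Field k]
    {ρ : C →+* k} (hρ : Function.Surjective ρ) {π : C} (hπ : π ≠ 0)
    (hker : RingHom.ker ρ = Ideal.span {π}) [IsAdicComplete (Ideal.span {π}) C] :
    IsDiscreteValuationRing C := by
  have ker_isMaximal : (RingHom.ker ρ).IsMaximal := RingHom.ker_isMaximal_of_surjective ρ hρ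
  have : IsLocalRing C := .of_unique_max_ideal ⟨_, ker_isMaximal, fun M hM ↦
    (ker_isMaximal.eq_of_le hM.ne_top
      (hker ▸ (IsAdicComplete.le_jacobson_bot _).trans (sInf_le ⟨bot_le, hM⟩))).symm⟩
  have maximalIdeal_eq : maximalIdeal C = Ideal.span {π} :=
    (eq_maximalIdeal ker_isMaximal).symm.trans hker
  refine .ofHasUnitMulPowIrreducibleFactorization
    ⟨π, IsDiscreteValuationRing.irreducible_of_span_eq_maximalIdeal π hπ maximalIdeal_eq, ?_⟩
  intro x hx
  have finiteMultiplicity : FiniteMultiplicity π x := by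
    by_contra h
    refine hx (IsHausdorff.haus (I := Ideal.span {π}) inferInstance x fun n ↦ ?_)
    rw [SModEq.zero, smul_eq_mul, Ideal.mul_top, Ideal.span_singleton_pow,
      Ideal.mem_span_singleton]
    exact FiniteMultiplicity.not_iff_forall.mp h n
  obtain ⟨u, hxu, hu⟩ := finiteMultiplicity.exists_eq_pow_mul_and_not_dvd
  rw [← Ideal.mem_span_singleton, ← maximalIdeal_eq, notMem_maximalIdeal] at hu
  exact ⟨_, hu.unit, hxu.symm⟩

lemma finite_of_pow_smul_top_eq_bot {S D M : Type*} [CommRing S] [CommRing D] [Algebra S D]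
    [AddCommGroup M] [Module S M] [Module D M] [IsScalarTower S D M] {I : Ideal D} (hI : I.FG)
    [Module.Finite S (D ⧸ I)] [hM : Module.Finite D M] {n : ℕ}
    (h : I ^ n • (⊤ : Submodule D M) = ⊥) : Module.Finite S M := by
  induction n generalizing M with
  | zero =>
    rw [pow_zero, Ideal.one_eq_top, Submodule.top_smul] at h
    have : Subsingleton M := (Submodule.subsingleton_iff D).mp (subsingleton_of_bot_eq_top h.symm)
    infer_instance
  | succ n ih =>
    let IM : Submodule D M := I • ⊤
    have : Module.Finite S (IM.restrictScalars S) := by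
      have : Module.Finite D IM := Module.Finite.iff_fg.mpr (Submodule.FG.smul hI hM.fg_top)
      refine ih (M := IM) (Submodule.map_injective_of_injective IM.subtype_injective ?_)
      rw [Submodule.map_smul'', Submodule.map_top, Submodule.range_subtype, Submodule.map_bot,
        ← Submodule.mul_smul, ← pow_succ, h]
    have : IsScalarTower S (D ⧸ I) (M ⧸ IM) := .of_algebraMap_smul fun s m ↦ by
      rw [← algebraMap_smul D s m]
      rfl
    have : Module.Finite S (M ⧸ IM) := .trans (D ⧸ I) _
    have : Module.Finite S (M ⧸ IM.restrictScalars S) :=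
      .equiv (Submodule.Quotient.restrictScalarsEquiv S IM).symm
    exact .of_submodule_quotient (IM.restrictScalars S)

lemma finite_quotientMk_comp_of_pow_le {S D : Type*} [CommRing S] [CommRing D] {f : S →+* D}
    {I J : Ideal D} (hI : I.FG) (hf : ((Ideal.Quotient.mk I).comp f).Finite) {n : ℕ}
    (h : I ^ n ≤ J) : ((Ideal.Quotient.mk J).comp f).Finite := by
  algebraize [f]
  have : Module.Finite S (D ⧸ I) := hf
  have pow_smul_top : I ^ n • (⊤ : Submodule D (D ⧸ J)) = ⊥ := by
    rw [Ideal.smul_top_eq_map, Submodule.restrictScalars_eq_bot_iff, Ideal.Quotient.algebraMap_eq,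
      Ideal.map_eq_bot_iff_le_ker, Ideal.mk_ker]
    exact h
  have : Module.Finite S (D ⧸ J) := finite_of_pow_smul_top_eq_bot hI pow_smul_top
  exact this

lemma finite_quotientMk_comp_of_isAdicComplete_span_singleton {C D : Type*} [CommRing C]
    [CommRing D] [IsLocalRing D] [IsNoetherianRing D] {f : C →+* D} {π : C}
    [IsAdicComplete (Ideal.span {π}) C] (hπ : f π ∈ maximalIdeal D) {J : Ideal D}
    (hf : ((Ideal.Quotient.mk (J ⊔ Ideal.span {f π})).comp f).Finite) :
    ((Ideal.Quotient.mk J).comp f).Finite := by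
  algebraize [f]
  have : Module.Finite C ((D ⧸ J) ⧸ (Ideal.span {π} • ⊤ : Submodule C (D ⧸ J))) := by
    have map_eq : (Ideal.span {π}).map (algebraMap C (D ⧸ J)) =
        (Ideal.span {f π}).map (Ideal.Quotient.mk J) := by
      rw [Ideal.map_span, Ideal.map_span, Set.image_singleton, Set.image_singleton]
      rfl
    rw [Ideal.smul_top_eq_map, map_eq]
    exact (RingHom.Finite.of_surjective _
      (DoubleQuot.quotQuotEquivQuotSup J (Ideal.span {f π})).symm.surjective).comp hf
  have : IsHausdorff (Ideal.span {π}) (D ⧸ J) := by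
    have : IsHausdorff (maximalIdeal D) (D ⧸ J) := inferInstance
    refine .of_map (J := maximalIdeal D) ?_
    rw [Ideal.map_span, Set.image_singleton, Ideal.span_singleton_le_iff_mem]
    exact hπ
  have : Module.Finite C (D ⧸ J) := finite_of_finite_quotient_smul_top (Ideal.span {π})
  exact this

section SystemOfParameters

variable {D : Type*} [CommRing D] [IsLocalRing D] [IsNoetherianRing D]

variable (D) in
lemma exists_maximalIdeal_pow_le_span_range :
    ∃ (d : ℕ) (x : Fin d → D), ringKrullDim D = d ∧ (∀ i, x i ∈ maximalIdeal D) ∧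
      ∃ N, maximalIdeal D ^ N ≤ Ideal.span (Set.range x) := by
  obtain ⟨s, hs, card_eq⟩ :=
    Ideal.exists_finset_card_eq_height_of_isNoetherianRing (maximalIdeal D)
  have range_eq : Set.range (fun i ↦ (s.equivFin.symm i : D)) = s := by
    rw [← Function.comp_def, s.equivFin.symm.surjective.range_comp]
    exact Subtype.range_coe
  refine ⟨s.card, fun i ↦ s.equivFin.symm i, ?_, fun i ↦ ?_, ?_⟩
  · rw [← maximalIdeal_height_eq_ringKrullDim, ← card_eq]
    rfl
  · exact hs.1.2 (Ideal.subset_span (s.equivFin.symm i).2)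
  · rw [range_eq]
    refine Ideal.exists_pow_le_of_le_radical_of_fg ?_ (maximalIdeal D).fg_of_isNoetherianRing
    rw [Ideal.radical_eq_sInf]
    exact le_sInf fun P hP ↦ hs.2 ⟨hP.2, hP.1⟩ (le_maximalIdeal hP.2.ne_top)

lemma exists_maximalIdeal_pow_le_span_range_sup {I : Ideal D} (hI : I ≠ ⊤) :
    ∃ (d : ℕ) (x : Fin d → D), ringKrullDim (D ⧸ I) = d ∧ (∀ i, x i ∈ maximalIdeal D) ∧
      ∃ N, maximalIdeal D ^ N ≤ Ideal.span (Set.range x) ⊔ I := by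
  have : Nontrivial (D ⧸ I) := Ideal.Quotient.nontrivial_iff.mpr hI
  have : IsLocalRing (D ⧸ I) := .of_surjective' _ Ideal.Quotient.mk_surjective
  obtain ⟨d, x, hd, hx, N, hN⟩ := exists_maximalIdeal_pow_le_span_range (D ⧸ I)
  choose y hy using fun i ↦ Ideal.Quotient.mk_surjective (x i)
  obtain rfl : x = Ideal.Quotient.mk I ∘ y := funext fun i ↦ (hy i).symm
  refine ⟨d, y, hd, fun i ↦ ?_, N, ?_⟩
  · exact (mem_maximalIdeal _).mpr fun hu ↦ (mem_maximalIdeal _).mp (hx i) (hu.map _)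
  · rw [← map_maximalIdeal_of_surjective _ Ideal.Quotient.mk_surjective, ← Ideal.map_pow,
      Set.range_comp, ← Ideal.map_span, Ideal.map_le_iff_le_comap,
      Ideal.comap_map_of_surjective _ Ideal.Quotient.mk_surjective, ← RingHom.ker_eq_comap_bot,
      Ideal.mk_ker] at hN
    exact hN

end SystemOfParameters

lemma charZero_of_natCast_ne_zero {D k : Type*} [CommRing D] [IsDomain D] [CommRing k] (ρ : D →+* k)
    {p : ℕ} [Fact p.Prime] [CharP k p] (hp : (p : D) ≠ 0) : CharZero D := by
  obtain ⟨q, _⟩ := CharP.exists D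
  obtain hq | rfl := CharP.char_is_prime_or_zero D q
  · have p_dvd_q : p ∣ q := by
      rw [← CharP.cast_eq_zero_iff k p, ← map_natCast ρ, CharP.cast_eq_zero, map_zero]
    have p_eq_q : p = q := (Nat.prime_dvd_prime_iff_eq Fact.out hq).mp p_dvd_q
    exact absurd (p_eq_q ▸ CharP.cast_eq_zero D q) hp
  · exact CharP.charP_to_charZero D

section CompleteLocalDomain

variable {D : Type*} [CommRing D] [IsLocalRing D] [IsNoetherianRing D]
  [IsAdicComplete (maximalIdeal D) D]

lemma finite_integralClosure_of_residue_section [IsDomain D] {s : ResidueField D →+* D}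
    (hs : ∀ t, residue D (s t) = t) :
    Module.Finite D (integralClosure D (FractionRing D)) := by
  obtain ⟨d, x, hd, hx, N, hN⟩ := exists_maximalIdeal_pow_le_span_range D
  have residue_comp_finite : ((residue D).comp s).Finite := .of_surjective _ fun t ↦ ⟨t, hs t⟩
  obtain ⟨g, hg⟩ := exists_finite_mvPowerSeries_hom (maximalIdeal D) s x hx
    (finite_quotientMk_comp_of_pow_le (maximalIdeal D).fg_of_isNoetherianRing
      residue_comp_finite hN)
  obtain ⟨p, _⟩ := ExpChar.exists (ResidueField D)
  exact (NormalizationBase.of_field p _).finite_integralClosure_fractionRing hg (by simp [hd])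

lemma finite_integralClosure_of_natCast_ne_zero [IsDomain D] (p : ℕ) [Fact p.Prime]
    [CharP (ResidueField D) p] (hp : (p : D) ≠ 0) :
    Module.Finite D (integralClosure D (FractionRing D)) := by
  have residue_p : residue D p = 0 := by rw [map_natCast, CharP.cast_eq_zero]
  have p_mem : (p : D) ∈ maximalIdeal D := (residue_eq_zero_iff _).mp residue_p
  have : IsAdicComplete (RingHom.ker (residue D)) D := by rwa [ker_residue]
  obtain ⟨C, residue_surjective, residue_ker, _⟩ := exists_coefficientSubring residue_surjective
    residue_p (IsLeftCancelMulZero.mul_left_cancel_of_ne_zero hp)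
  have : IsDiscreteValuationRing C := isDiscreteValuationRing_of_ker_eq_span residue_surjective
    (fun h ↦ hp (by simpa using congrArg C.subtype h)) residue_ker
  have : CharZero D := charZero_of_natCast_ne_zero (residue D) hp
  obtain ⟨d, x, hd, hx, N, hN⟩ := exists_maximalIdeal_pow_le_span_range_sup
    ((Ideal.span_singleton_le_iff_mem _).mpr p_mem |>.trans_lt
      (Ideal.IsMaximal.out (I := maximalIdeal D)).1.lt_top).ne
  have finite_mod_p := finite_quotientMk_comp_of_pow_le
    (maximalIdeal D).fg_of_isNoetherianRing (.of_surjective _ residue_surjective) hN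
  obtain ⟨g, hg⟩ := exists_finite_mvPowerSeries_hom (maximalIdeal D) C.subtype x hx
    (finite_quotientMk_comp_of_isAdicComplete_span_singleton (π := (p : C)) (by simpa) (by simpa))
  refine (NormalizationBase.of_isDiscreteValuationRing C).finite_integralClosure_fractionRing hg ?_
  rw [← ringKrullDim_quotient_span_singleton_succ_eq_ringKrullDim_of_mem_nonZeroDivisors
    (mem_nonZeroDivisors_of_ne_zero hp) p_mem, hd, add_comm]
  rfl

variable (D) in
theorem finite_integralClosure_of_isAdicComplete [IsDomain D] :
    Module.Finite D (integralClosure D (FractionRing D)) := by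
  have : IsAdicComplete (RingHom.ker (residue D)) D := by rwa [ker_residue]
  obtain ⟨p, hp⟩ := CharP.exists (ResidueField D)
  obtain hprime | rfl := CharP.char_is_prime_or_zero (ResidueField D) p
  · have : Fact p.Prime := ⟨hprime⟩
    by_cases hpD : (p : D) = 0
    · obtain ⟨s, hs⟩ := exists_ringHom_section_of_natCast_eq_zero p hpD (residue D)
        residue_surjective
      exact finite_integralClosure_of_residue_section hs
    · exact finite_integralClosure_of_natCast_ne_zero p hpD
  · have : CharZero (ResidueField D) := CharP.charP_to_charZero _
    have charZero_quotient (I : Ideal D) (hI : I ≠ ⊤) : CharZero (D ⧸ I) :=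
      RingHom.charZero (S := ResidueField D) (Ideal.Quotient.factor (le_maximalIdeal hI))
    obtain ⟨_⟩ := (EqualCharZero.nonempty_algebraRat_iff D).mpr charZero_quotient
    obtain ⟨s, hs⟩ := exists_ringHom_section_of_perfectField ℚ (residue D) residue_surjective
    exact finite_integralClosure_of_residue_section hs

end CompleteLocalDomain

section FaithfullyFlatDescent

open TensorProduct

theorem algebraMap_mem_nonZeroDivisors_of_flat {R : Type*} (B : Type*) [CommRing R] [CommRing B]
    [Algebra R B] [Module.Flat R B] {r : R} (hr : r ∈ nonZeroDivisors R) :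
    algebraMap R B r ∈ nonZeroDivisors B := by
  rw [mem_nonZeroDivisors_iff_right]
  intro b hb
  apply Module.Flat.isSMulRegular_of_nonZeroDivisors (M := B) hr
  simpa only [Algebra.smul_def, mul_comm _ b, mul_zero, zero_mul] using hb

theorem finite_integralClosure_of_faithfullyFlat {R B : Type*} (A : Type*) [CommRing R] [CommRing B]
    [CommRing A] [Algebra R B] [Algebra B A] [Algebra R A] [IsScalarTower R B A]
    [Module.FaithfullyFlat R B] [IsNoetherianRing B] [Module.Finite B (integralClosure B A)]
    (hBA : Function.Injective (algebraMap B A))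
    (hunit : ∀ r : nonZeroDivisors R, IsUnit (algebraMap R A r)) :
    Module.Finite R (integralClosure R (FractionRing R)) := by
  let φ : FractionRing R →ₐ[R] A := IsLocalization.liftAlgHom (f := Algebra.ofId R A) hunit
  let Φ : B ⊗[R] FractionRing R →ₐ[B] A :=
    Algebra.TensorProduct.lift (Algebra.ofId B A) φ fun _ _ ↦ .all _ _
  let Ψ : B ⊗[R] integralClosure R (FractionRing R) →ₐ[B] A :=
    Φ.comp (Algebra.TensorProduct.map (.id B B) (integralClosure R (FractionRing R)).val)
  have Φ_injective : Function.Injective Φ :=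
    IsLocalization.injective_of_map_algebraMap_zero (B ⊗[R] FractionRing R)
      (M := Algebra.algebraMapSubmonoid B (nonZeroDivisors R)) Φ.toRingHom fun b hb ↦ by
        rw [(injective_iff_map_eq_zero _).mp hBA b ((Φ.commutes b).symm.trans hb), map_zero]
  have Ψ_injective : Function.Injective Ψ :=
    Φ_injective.comp (Module.Flat.lTensor_preserves_injective_linearMap
      (integralClosure R (FractionRing R)).val.toLinearMap Subtype.val_injective)
  have Ψ_mem (t) : Ψ t ∈ integralClosure B A := (Algebra.IsIntegral.isIntegral t).map Ψ
  have : Module.Finite B (B ⊗[R] integralClosure R (FractionRing R)) :=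
    .of_injective (Ψ.codRestrict _ Ψ_mem).toLinearMap
      ((AlgHom.injective_codRestrict _ _ Ψ_mem).mpr Ψ_injective)
  exact .of_finite_tensorProduct_of_faithfullyFlat B

theorem finite_integralClosure_pi_fractionRing {ι B : Type*} [Finite ι] [CommRing B]
    [IsNoetherianRing B] (P : ι → Ideal B) [∀ i, (P i).IsPrime]
    [∀ i, Module.Finite (B ⧸ P i) (integralClosure (B ⧸ P i) (FractionRing (B ⧸ P i)))] :
    Module.Finite B (integralClosure B (∀ i, FractionRing (B ⧸ P i))) := by
  have (i : ι) : Module.Finite B (integralClosure (B ⧸ P i) (FractionRing (B ⧸ P i))) :=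
    .trans (B ⧸ P i) _
  let component (i : ι) : integralClosure B (∀ i, FractionRing (B ⧸ P i)) →ₗ[B]
      integralClosure (B ⧸ P i) (FractionRing (B ⧸ P i)) :=
    LinearMap.codRestrict ((integralClosure (B ⧸ P i) _).toSubmodule.restrictScalars B)
      ((Pi.evalAlgHom B (fun i ↦ FractionRing (B ⧸ P i)) i).comp
        (integralClosure B _).val).toLinearMap
      fun y ↦ (y.2.map (Pi.evalAlgHom B _ i)).tower_top
  refine .of_injective (LinearMap.pi component) fun y z hyz ↦ Subtype.ext (funext fun i ↦ ?_)
  exact congrArg Subtype.val (congrFun hyz i)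

theorem algebraMap_pi_minimalPrimes_injective (B : Type*) [CommRing B] [IsReduced B] :
    Function.Injective (algebraMap B (∀ P : minimalPrimes B, FractionRing (B ⧸ P.1))) := by
  rw [injective_iff_map_eq_zero]
  intro b hb
  have hb_mem : b ∈ sInf (minimalPrimes B) := Submodule.mem_sInf.mpr fun P hP ↦ by
    rw [← Ideal.Quotient.eq_zero_iff_mem]
    exact FaithfulSMul.algebraMap_injective (B ⧸ P) (FractionRing (B ⧸ P))
      ((congrFun hb ⟨P, hP⟩).trans (map_zero _).symm)
  rw [minimalPrimes, Ideal.sInf_minimalPrimes] at hb_mem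
  exact (mem_nilradical.mp hb_mem).eq_zero

theorem finite_integralClosure_of_forall_minimalPrimes {R : Type*} (B : Type*) [CommRing R]
    [CommRing B] [Algebra R B] [Module.FaithfullyFlat R B] [IsNoetherianRing B] [IsReduced B]
    (h : ∀ P ∈ minimalPrimes B,
      Module.Finite (B ⧸ P) (integralClosure (B ⧸ P) (FractionRing (B ⧸ P)))) :
    Module.Finite R (integralClosure R (FractionRing R)) := by
  have (P : minimalPrimes B) : P.1.IsPrime := P.2.1.1
  have : Finite (minimalPrimes B) := minimalPrimes.finite_of_isNoetherianRing B
  have (P : minimalPrimes B) := h P P.2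
  have := finite_integralClosure_pi_fractionRing fun P : minimalPrimes B ↦ P.1
  refine finite_integralClosure_of_faithfullyFlat (B := B)
    (∀ P : minimalPrimes B, FractionRing (B ⧸ P.1))
    (algebraMap_pi_minimalPrimes_injective B) fun r ↦ Pi.isUnit_iff.mpr fun P ↦ ?_
  have r_notMem : algebraMap R B r ∉ P.1 := fun hr ↦
    Set.disjoint_left.mp (Ideal.disjoint_nonZeroDivisors_of_mem_minimalPrimes P.2) hr
      (algebraMap_mem_nonZeroDivisors_of_flat B r.2)
  rw [isUnit_iff_ne_zero, Pi.algebraMap_apply, IsScalarTower.algebraMap_apply R (B ⧸ P.1),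
    map_ne_zero_iff _ (FaithfulSMul.algebraMap_injective _ _)]
  exact mt Ideal.Quotient.eq_zero_iff_mem.mp r_notMem

end FaithfullyFlatDescent

section AdicCompletion

variable (R : Type*) [CommRing R] [IsLocalRing R] [IsNoetherianRing R]

instance isNoetherianRing_adicCompletion :
    IsNoetherianRing (AdicCompletion (maximalIdeal R) R) := by
  let f := algebraMap R (AdicCompletion (maximalIdeal R) R)
  obtain ⟨n, x, hx⟩ := Submodule.fg_iff_exists_fin_generating_family.mp
    (maximalIdeal R).fg_of_isNoetherianRing
  have span_eq : Ideal.span (Set.range (f ∘ x)) =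
      maximalIdeal (AdicCompletion (maximalIdeal R) R) := by
    rw [AdicCompletion.maximalIdeal_eq_map, Set.range_comp, ← Ideal.map_span]
    exact congrArg (Ideal.map f) hx
  have mk_comp_surjective :
      Function.Surjective ((Ideal.Quotient.mk (Ideal.span (Set.range (f ∘ x)))).comp f) := by
    rw [span_eq]
    exact (AdicCompletion.residueField_map_bijective R).2.comp residue_surjective
  obtain ⟨g, hg⟩ := exists_finite_mvPowerSeries_hom
    (maximalIdeal (AdicCompletion (maximalIdeal R) R)) f (f ∘ x)
    (fun i ↦ span_eq ▸ Ideal.subset_span ⟨i, rfl⟩)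
    (RingHom.Finite.of_surjective _ mk_comp_surjective)
  let _ := g.toAlgebra
  have : Module.Finite (MvPowerSeries (Fin n) R) (AdicCompletion (maximalIdeal R) R) := hg
  exact .of_finite (MvPowerSeries (Fin n) R) _

theorem finite_integralClosure_of_isReduced_adicCompletion
    [IsReduced (AdicCompletion (maximalIdeal R) R)] :
    Module.Finite R (integralClosure R (FractionRing R)) := by
  have : Module.FaithfullyFlat R (AdicCompletion (maximalIdeal R) R) :=
    .of_flat_of_isLocalHom
  refine finite_integralClosure_of_forall_minimalPrimes (AdicCompletion (maximalIdeal R) R)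
    fun P hP ↦ ?_
  have : P.IsPrime := hP.1.1
  have mk_surjective := Ideal.Quotient.mk_surjective (I := P)
  have := IsLocalRing.of_surjective' (Ideal.Quotient.mk P) mk_surjective
  have := isAdicComplete_map_of_surjective (maximalIdeal (AdicCompletion (maximalIdeal R) R)) _
    mk_surjective
  rw [map_maximalIdeal_of_surjective _ mk_surjective] at this
  exact finite_integralClosure_of_isAdicComplete _

end AdicCompletion

section Conductor

variable {R : Type} [CommRing R]

theorem mem_conductorIdeal_iff {r : R} :
    r ∈ conductorIdeal R ↔ ∀ y : IntClosure R, ∃ s : R, algebraMap R (IntClosure R) s = r • y := by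
  rw [conductorIdeal, Module.mem_annihilator, (Submodule.mkQ_surjective _).forall]
  refine forall_congr' fun y ↦ ?_
  rw [← map_smul, Submodule.mkQ_apply, Submodule.Quotient.mk_eq_zero, LinearMap.mem_range]
  rfl

theorem exists_mem_conductorIdeal_algebraMap_eq_smul {r : R} (hr : r ∈ conductorIdeal R)
    (y : IntClosure R) : ∃ s ∈ conductorIdeal R, algebraMap R (IntClosure R) s = r • y := by
  rw [mem_conductorIdeal_iff] at hr
  obtain ⟨s, hs⟩ := hr y
  refine ⟨s, mem_conductorIdeal_iff.mpr fun z ↦ ?_, hs⟩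
  rw [Algebra.smul_def, hs, smul_mul_assoc]
  exact hr (y * z)

theorem mem_conductorIdeal_of_mul_mem {x t : R} (hx : x ∈ nonZeroDivisors R)
    (hle : conductorIdeal R ≤ Ideal.span {x}) (ht : x * t ∈ conductorIdeal R) :
    t ∈ conductorIdeal R := by
  refine mem_conductorIdeal_iff.mpr fun y ↦ ?_
  obtain ⟨s, s_mem, hs⟩ := exists_mem_conductorIdeal_algebraMap_eq_smul ht y
  obtain ⟨u, rfl⟩ := Ideal.mem_span_singleton.mp (hle s_mem)
  have x_isUnit : IsUnit (algebraMap R (FractionRing R) x) :=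
    IsLocalization.map_units _ (⟨x, hx⟩ : nonZeroDivisors R)
  refine ⟨u, Subtype.ext (x_isUnit.mul_left_cancel ?_)⟩
  simpa only [map_mul, Algebra.smul_def, MulMemClass.coe_mul, Subalgebra.coe_algebraMap, mul_assoc]
    using congrArg Subtype.val hs

variable (R) in
theorem isTorsion_intClosureQuot : Module.IsTorsion R (IntClosureQuot R) := by
  intro z
  obtain ⟨y, rfl⟩ := Submodule.mkQ_surjective _ z
  obtain ⟨⟨a, b⟩, hab⟩ := IsLocalization.surj (nonZeroDivisors R) (y : FractionRing R)
  refine ⟨b, (Submodule.Quotient.mk_eq_zero _).mpr ⟨a, Subtype.ext ?_⟩⟩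
  exact hab.symm.trans ((mul_comm _ _).trans (Algebra.smul_def _ _).symm)

variable (R) in
theorem exists_mem_conductorIdeal_mem_nonZeroDivisors [Module.Finite R (IntClosure R)] :
    ∃ c ∈ conductorIdeal R, c ∈ nonZeroDivisors R := by
  rw [conductorIdeal, ← Submodule.annihilator_top]
  exact Submodule.annihilator_top_inter_nonZeroDivisors (isTorsion_intClosureQuot R)

theorem not_conductorIdeal_le_span_singleton [IsLocalRing R] [IsNoetherianRing R]
    [Module.Finite R (IntClosure R)] {x : R} (hx : x ∈ maximalIdeal R) :
    ¬ conductorIdeal R ≤ Ideal.span {x} := by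
  intro hle
  obtain ⟨c, c_mem, hc⟩ := exists_mem_conductorIdeal_mem_nonZeroDivisors R
  have x_regular : x ∈ nonZeroDivisors R := by
    obtain ⟨t, rfl⟩ := Ideal.mem_span_singleton.mp (hle c_mem)
    exact (mul_mem_nonZeroDivisors.mp hc).1
  have le_smul : conductorIdeal R ≤ maximalIdeal R • conductorIdeal R := by
    intro r hr
    obtain ⟨t, rfl⟩ := Ideal.mem_span_singleton.mp (hle hr)
    exact Ideal.mul_mem_mul hx (mem_conductorIdeal_of_mul_mem x_regular hle hr)
  have conductor_eq_bot : conductorIdeal R = ⊥ :=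
    Submodule.eq_bot_of_le_smul_of_le_jacobson_bot (maximalIdeal R) (conductorIdeal R)
      (IsNoetherian.noetherian _) le_smul (maximalIdeal_le_jacobson _)
  rw [conductor_eq_bot, Submodule.mem_bot] at c_mem
  exact nonZeroDivisors.ne_zero hc c_mem

end Conductor

-- STATEMENT 17
theorem stmt17 (R : Type) [CommRing R] [IsLocalRing R] [IsNoetherianRing R]
    (hau : AnalyticallyUnramified R) :
    ∀ x ∈ maximalIdeal R, ¬ conductorIdeal R ≤ Ideal.span {x} := by
  have : IsReduced (AdicCompletion (maximalIdeal R) R) := hau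
  have := finite_integralClosure_of_isReduced_adicCompletion R
  exact fun x hx ↦ not_conductorIdeal_le_span_singleton hx
end
end

section
/- Let (R, m) be a 2-dimensional analytically unramified Noetherian local ring satisfying Serre's condition (R1) (R_p is regular for every prime p of height ≤ 1) and with m · H^1_m(R) = 0 (e.g. R Buchsbaum). Then for every system of parameters x_1, x_2 of R, the conductor ideal is not contained in the parameter ideal: 𝔠 ⊄ (x_1, x_2)R. -/
open CategoryTheory IsLocalRing

set_option synthInstance.maxHeartbeats 1000000
set_option maxHeartbeats 1000000

noncomputable section

/-!
Let `z` be integral over `R`. Off the maximal ideal `m` the ring is normal, so `mⁿ z ⊆ R` for some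
`n`, and multiplication by `z` is a homomorphism `mⁿ → R`. Its image under the connecting map
`Hom(mⁿ, R) → Ext¹(R/mⁿ, R) → H¹_m(R)` is killed by every `y ∈ m`, so on a smaller power of `m`
multiplication by `y z` is multiplication by an element of `R`; that is, `y z ∈ R`. Hence `m ⊆ 𝔠`.

If now `𝔠 ⊆ (x)` for a system of parameters `x`, then `m = (x)` and `R` is regular. In dimension at
most one `R` is then normal. In higher dimension `R` is a domain containing a prime element `p ∈ m`
and some `b ∈ m` not divisible by `p`, and `p z, b z ∈ R` force `z ∈ R`. Either way `𝔠 = R`, which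
contradicts `𝔠 ⊆ (x) ⊆ m`.
-/

section KrullDimension

variable {R : Type*} [CommRing R]

theorem exists_isPrime_ringKrullDim_quotient_eq [FiniteRingKrullDim R] :
    ∃ p : Ideal R, p.IsPrime ∧ ringKrullDim (R ⧸ p) = ringKrullDim R := by
  let chain := LTSeries.longestOf (PrimeSpectrum R)
  refine ⟨chain.head.asIdeal, chain.head.isPrime, (ringKrullDim_quotient_le _).antisymm ?_⟩
  have hIci : PrimeSpectrum.zeroLocus (chain.head.asIdeal : Set R) = Set.Ici chain.head := rfl
  rw [ringKrullDim_quotient, hIci, ← Order.coheight_eq_krullDim_Ici, ringKrullDim,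
    Order.krullDim_eq_length_of_finiteDimensionalOrder]
  exact_mod_cast Order.length_le_coheight_head

theorem le_span_singleton_of_ringKrullDim_quotient_lt [IsNoetherianRing R] [IsLocalRing R]
    {x : R} (hx : x ∈ maximalIdeal R) [IsDomain (R ⧸ Ideal.span {x})] {p : Ideal R} [p.IsPrime]
    (hdim : ringKrullDim (R ⧸ Ideal.span {x}) < ringKrullDim (R ⧸ p)) : p ≤ Ideal.span {x} := by
  intro a ha
  by_contra hax
  let xbar := Ideal.Quotient.mk p x
  have := IsLocalRing.of_surjective' _ (Ideal.Quotient.mk_surjective (I := p))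
  have hxbar : xbar ∈ maximalIdeal (R ⧸ p) := by
    rw [← map_maximalIdeal_of_surjective _ (Ideal.Quotient.mk_surjective (I := p))]
    exact Ideal.mem_map_of_mem _ hx
  have hle : Ideal.span {x} ≤ (Ideal.span {xbar}).comap (Ideal.Quotient.mk p) := by
    rw [Ideal.span_singleton_le_iff_mem]
    exact Ideal.mem_span_singleton_self xbar
  have hdrop : ringKrullDim ((R ⧸ p) ⧸ Ideal.span {xbar}) + 1 ≤
      ringKrullDim (R ⧸ Ideal.span {x}) :=
    ringKrullDim_succ_le_of_surjective (Ideal.quotientMap _ (Ideal.Quotient.mk p) hle)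
      (Ideal.quotientMap_surjective Ideal.Quotient.mk_surjective)
      (mem_nonZeroDivisors_of_ne_zero (mt Ideal.Quotient.eq_zero_iff_mem.1 hax))
      (by rw [Ideal.quotientMap_mk, Ideal.Quotient.eq_zero_iff_mem.2 ha, map_zero])
  have hkrull : ringKrullDim (R ⧸ p) ≤ ringKrullDim ((R ⧸ p) ⧸ Ideal.span {xbar}) + 1 := by
    rw [← maximalIdeal_height_eq_ringKrullDim]
    exact Ideal.height_le_ringKrullDim_quotient_add_one hxbar
  exact (hkrull.trans hdrop).not_gt hdim

theorem isDomain_of_isDomain_quotient_span_singleton [IsNoetherianRing R] [IsLocalRing R]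
    {x : R} (hx : x ∈ maximalIdeal R) [IsDomain (R ⧸ Ideal.span {x})]
    (hdim : ringKrullDim (R ⧸ Ideal.span {x}) < ringKrullDim R) : IsDomain R := by
  obtain ⟨p, hp, hpdim⟩ := exists_isPrime_ringKrullDim_quotient_eq (R := R)
  rw [← hpdim] at hdim
  have hxp : x ∉ p := fun hxp => hdim.not_ge <|
    ringKrullDim_le_of_surjective (Ideal.Quotient.factor (p.span_singleton_le_iff_mem.2 hxp))
      (Ideal.Quotient.factor_surjective _)
  -- As `p ⊆ (x)` is prime and `x ∉ p`, we have `p = x p`, so Nakayama gives `p = 0`.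
  have hsmul : p ≤ Ideal.span {x} • p := by
    intro a ha
    obtain ⟨b, rfl⟩ :=
      Ideal.mem_span_singleton.1 (le_span_singleton_of_ringKrullDim_quotient_lt hx hdim ha)
    exact Ideal.mul_mem_mul (Ideal.mem_span_singleton_self x) ((hp.mem_or_mem ha).resolve_left hxp)
  have hbot : p = ⊥ := Submodule.eq_bot_of_le_smul_of_le_jacobson_bot _ p
    (IsNoetherian.noetherian p) hsmul (by
      rwa [jacobson_eq_maximalIdeal ⊥ bot_ne_top, Ideal.span_singleton_le_iff_mem])
  subst hbot
  exact IsDomain.of_bot_isPrime R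

end KrullDimension

section RegularLocalRing

theorem isRegularLocalRing_of_span_eq_maximalIdeal {R : Type*} [CommRing R] [IsLocalRing R]
    [IsNoetherianRing R] {s : Finset R} (hs : Ideal.span s = maximalIdeal R)
    (hcard : s.card ≤ ringKrullDim R) : IsRegularLocalRing R := by
  refine .of_spanFinrank_maximalIdeal_le R (le_trans ?_ hcard)
  rw [← hs, ← Set.ncard_coe_finset]
  exact Nat.cast_le.2 (Submodule.spanFinrank_span_le_ncard_of_finite s.finite_toSet)

theorem spanFinrank_maximalIdeal_quotient_add_one_le {R : Type*} [CommRing R] [IsLocalRing R]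
    {s : Finset R} (hs : Ideal.span s = maximalIdeal R) {x : R} (hx : x ∈ s)
    [IsLocalRing (R ⧸ Ideal.span {x})] :
    (maximalIdeal (R ⧸ Ideal.span {x})).spanFinrank + 1 ≤ s.card := by
  classical
  let π := Ideal.Quotient.mk (Ideal.span {x})
  have hπx : π x = 0 := Ideal.Quotient.eq_zero_iff_mem.2 (Ideal.mem_span_singleton_self x)
  have hgen : maximalIdeal (R ⧸ Ideal.span {x}) = Ideal.span ((s.erase x).image π) := by
    rw [← map_maximalIdeal_of_surjective π Ideal.Quotient.mk_surjective, ← hs, Ideal.map_span,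
      ← Finset.insert_erase hx, Finset.coe_insert, Set.image_insert_eq, hπx,
      Ideal.span_insert_zero, Finset.erase_insert (Finset.notMem_erase x s), Finset.coe_image]
  calc (maximalIdeal (R ⧸ Ideal.span {x})).spanFinrank + 1
    _ ≤ ((s.erase x).image π).card + 1 := by
      rw [hgen, ← Set.ncard_coe_finset]
      gcongr
      exact Submodule.spanFinrank_span_le_ncard_of_finite (Finset.finite_toSet _)
    _ ≤ (s.erase x).card + 1 := by gcongr; exact Finset.card_image_le
    _ = s.card := Finset.card_erase_add_one hx

theorem exists_isRegularLocalRing_quotient_span_singleton {R : Type*} [CommRing R]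
    [IsRegularLocalRing R] (h : maximalIdeal R ≠ ⊥) :
    ∃ x ∈ maximalIdeal R, IsRegularLocalRing (R ⧸ Ideal.span {x}) ∧
      ringKrullDim (R ⧸ Ideal.span {x}) + 1 = ringKrullDim R := by
  obtain ⟨s, hcard, hs⟩ := Submodule.FG.exists_span_finset_card_eq_spanFinrank
    (IsNoetherian.noetherian (maximalIdeal R))
  obtain ⟨x, hx⟩ : s.Nonempty := by
    rw [Finset.nonempty_iff_ne_empty]
    rintro rfl
    exact h (by rw [← hs, Finset.coe_empty, Submodule.span_empty])
  have hxm : x ∈ maximalIdeal R := hs ▸ Submodule.subset_span hx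
  have : Nontrivial (R ⧸ Ideal.span {x}) :=
    Ideal.Quotient.nontrivial_iff.2 (mt Ideal.span_singleton_eq_top.1 hxm)
  have := IsLocalRing.of_surjective' _ (Ideal.Quotient.mk_surjective (I := Ideal.span {x}))
  have hrank : ((maximalIdeal (R ⧸ Ideal.span {x})).spanFinrank + 1 : WithBot ℕ∞) ≤
      ringKrullDim R := by
    rw [← IsRegularLocalRing.spanFinrank_maximalIdeal, ← hcard]
    exact_mod_cast spanFinrank_maximalIdeal_quotient_add_one_le hs hx
  have hkrull : ringKrullDim R ≤ ringKrullDim (R ⧸ Ideal.span {x}) + 1 := by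
    rw [← maximalIdeal_height_eq_ringKrullDim]
    exact Ideal.height_le_ringKrullDim_quotient_add_one hxm
  have hregular : IsRegularLocalRing (R ⧸ Ideal.span {x}) :=
    .of_spanFinrank_maximalIdeal_le _ <|
      (ENat.WithBot.add_le_add_one_right_iff).1 (hrank.trans hkrull)
  exact ⟨x, hxm, hregular, le_antisymm (hregular.spanFinrank_maximalIdeal ▸ hrank) hkrull⟩

theorem isDomain_of_isRegularLocalRing (R : Type*) [CommRing R] [IsRegularLocalRing R] :
    IsDomain R := by
  by_cases hbot : maximalIdeal R = ⊥
  · exact (isField_iff_maximalIdeal_eq.2 hbot).isDomain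
  · obtain ⟨x, hx, hregular, hdim⟩ := exists_isRegularLocalRing_quotient_span_singleton hbot
    have hlt : ringKrullDim (R ⧸ Ideal.span {x}) < ringKrullDim R := by
      rw [← hdim, ← hregular.spanFinrank_maximalIdeal]
      exact_mod_cast Nat.lt_succ_self _
    have := isDomain_of_isRegularLocalRing (R ⧸ Ideal.span {x})
    exact isDomain_of_isDomain_quotient_span_singleton hx hlt
termination_by (maximalIdeal R).spanFinrank
decreasing_by
  simpa only [← IsRegularLocalRing.spanFinrank_maximalIdeal, Nat.cast_lt] using hlt

theorem isIntegrallyClosed_of_ringKrullDim_le_one {R : Type*} [CommRing R]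
    [IsRegularLocalRing R] (h : ringKrullDim R ≤ 1) : IsIntegrallyClosed R := by
  have := isDomain_of_isRegularLocalRing R
  rw [← (IsRegularLocalRing.iff_finrank_cotangentSpace R).1 inferInstance] at h
  have hclosed := (tfae_of_isNoetherianRing_of_isLocalRing_of_isDomain R).out 5 3
  exact (hclosed.1 (by exact_mod_cast h)).1

theorem exists_prime_mem_maximalIdeal {R : Type*} [CommRing R] [IsRegularLocalRing R]
    (h : maximalIdeal R ≠ ⊥) : ∃ x ∈ maximalIdeal R, Prime x := by
  obtain ⟨x, hx, hregular, hdim⟩ := exists_isRegularLocalRing_quotient_span_singleton h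
  have hx0 : x ≠ 0 := by
    rintro rfl
    rw [Ideal.span_singleton_zero, ringKrullDim_eq_of_ringEquiv (RingEquiv.quotientBot R),
      ← IsRegularLocalRing.spanFinrank_maximalIdeal] at hdim
    norm_cast at hdim
    exact Nat.succ_ne_self _ hdim
  have hdomain := isDomain_of_isRegularLocalRing (R ⧸ Ideal.span {x})
  rw [Ideal.Quotient.isDomain_iff_prime, Ideal.span_singleton_prime hx0] at hdomain
  exact ⟨x, hx, hdomain⟩

theorem ringKrullDim_le_one_of_maximalIdeal_eq_span_singleton {R : Type*} [CommRing R]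
    [IsNoetherianRing R] [IsLocalRing R] {x : R} (hx : maximalIdeal R = Ideal.span {x}) :
    ringKrullDim R ≤ 1 := by
  refine (ringKrullDim_le_spanFinrank_maximalIdeal R).trans ?_
  rw [hx]
  simpa using! Submodule.spanFinrank_span_le_ncard_of_finite (R := R) (Set.finite_singleton x)

theorem mem_one_of_prime_of_not_dvd {R K : Type*} [CommRing R] [IsDomain R] [Field K] [Algebra R K]
    [IsFractionRing R K] {x b : R} (hx : Prime x) (hb : ¬ x ∣ b) {z : K}
    (hxz : x • z ∈ (1 : Submodule R K)) (hbz : b • z ∈ (1 : Submodule R K)) :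
    z ∈ (1 : Submodule R K) := by
  obtain ⟨r, hr⟩ := Submodule.mem_one.1 hxz
  obtain ⟨t, ht⟩ := Submodule.mem_one.1 hbz
  have hcross : b * r = x * t := by
    apply IsFractionRing.injective R K
    rw [map_mul, map_mul, hr, ht, ← Algebra.smul_def, ← Algebra.smul_def, smul_comm]
  obtain ⟨c, rfl⟩ := (hx.dvd_or_dvd ⟨t, hcross⟩).resolve_left hb
  refine Submodule.mem_one.2 ⟨c, smul_right_injective K hx.ne_zero ?_⟩
  simpa only [map_mul, Algebra.smul_def] using hr

theorem mem_one_of_maximalIdeal_le_colon {R K : Type*} [CommRing R] [IsRegularLocalRing R]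
    [IsDomain R] [Field K] [Algebra R K] [IsFractionRing R K] (hdim : 1 < ringKrullDim R) {z : K}
    (hz : maximalIdeal R ≤ (1 : Submodule R K).colon {z}) : z ∈ (1 : Submodule R K) := by
  have hnotPrincipal (x : R) : maximalIdeal R ≠ Ideal.span {x} := fun hx =>
    hdim.not_ge (ringKrullDim_le_one_of_maximalIdeal_eq_span_singleton hx)
  obtain ⟨x, hx, hprime⟩ := exists_prime_mem_maximalIdeal (R := R)
    (Ideal.span_singleton_zero (α := R) ▸ hnotPrincipal 0)
  obtain ⟨b, hb, hbx⟩ : ∃ b ∈ maximalIdeal R, b ∉ Ideal.span {x} :=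
    SetLike.not_le_iff_exists.1 fun hle =>
      hnotPrincipal x (hle.antisymm ((maximalIdeal R).span_singleton_le_iff_mem.2 hx))
  exact mem_one_of_prime_of_not_dvd hprime (mt Ideal.mem_span_singleton.2 hbx)
    (Submodule.mem_colon_singleton.1 (hz hx)) (Submodule.mem_colon_singleton.1 (hz hb))

end RegularLocalRing

section HomologyDesc

open Limits

variable {C ι : Type*} [Category* C] [Abelian C] {T T' : C} {c : ComplexShape ι} {i j : ι}
  (K L : HomologicalComplex C c)

/-- The morphism out of the homology in degree `i` induced by a cocycle `β : Kᵢ ⟶ T`. -/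
def homologyDesc (hj : c.prev i = j) (β : K.X i ⟶ T) (hβ : K.d j i ≫ β = 0) :
    K.homology i ⟶ T :=
  K.homologyι i ≫ K.descOpcycles β j hj hβ

variable {K L}

theorem homologyDesc_comp (hj : c.prev i = j) (β : K.X i ⟶ T) (hβ : K.d j i ≫ β = 0)
    (f : T ⟶ T') :
    homologyDesc K hj β hβ ≫ f = homologyDesc K hj (β ≫ f) (by rw [reassoc_of% hβ, zero_comp]) := by
  rw [homologyDesc, homologyDesc, Category.assoc, HomologicalComplex.descOpcycles_comp]

theorem homologyMap_comp_homologyDesc (g : K ⟶ L) (hj : c.prev i = j) (β : L.X i ⟶ T)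
    (hβ : L.d j i ≫ β = 0) :
    HomologicalComplex.homologyMap g i ≫ homologyDesc L hj β hβ =
      homologyDesc K hj (g.f i ≫ β) (by rw [← g.comm_assoc, hβ, comp_zero]) := by
  rw [homologyDesc, homologyDesc, HomologicalComplex.homologyι_naturality_assoc,
    HomologicalComplex.opcyclesMap_comp_descOpcycles]

theorem homologyDesc_eq_of_sub_eq (hj : c.prev i = j) {β γ : K.X i ⟶ T} (hβ : K.d j i ≫ β = 0)
    (hγ : K.d j i ≫ γ = 0) {k : ι} (ψ : K.X k ⟶ T) (hψ : β - γ = K.d i k ≫ ψ) :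
    homologyDesc K hj β hβ = homologyDesc K hj γ hγ := by
  have hsub : K.descOpcycles β j hj hβ - K.descOpcycles γ j hj hγ =
      K.descOpcycles (β - γ) j hj (by rw [Preadditive.comp_sub, hβ, hγ, sub_self]) := by
    simp [← cancel_epi (K.pOpcycles i)]
  rw [← sub_eq_zero, homologyDesc, homologyDesc, ← Preadditive.comp_sub, hsub]
  exact K.homologyι_descOpcycles_eq_zero_of_boundary (β - γ) j hj ψ hψ

theorem homologyDesc_zero (hj : c.prev i = j) :
    homologyDesc K hj (0 : _ ⟶ T) comp_zero = 0 := by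
  simp [homologyDesc, ← cancel_epi (K.homologyπ i)]

theorem liftCycles_comp_homologyπ_comp_homologyDesc (hj : c.prev i = j) (β : K.X i ⟶ T)
    (hβ : K.d j i ≫ β = 0) {k : ι} (hk : c.next i = k) (z : T' ⟶ K.X i) (hz : z ≫ K.d i k = 0) :
    K.liftCycles z k hk hz ≫ K.homologyπ i ≫ homologyDesc K hj β hβ = z ≫ β := by
  simp [homologyDesc]

end HomologyDesc

section LeftDerived

open Limits

variable {C D : Type*} [Category* C] [Abelian C] [Category* D] [Abelian D]

/-- The augmentation `P₀ ⟶ X` of a projective resolution, with target `X` itself rather than the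
degree-zero term of the complex concentrated in degree zero. -/
abbrev augmentation {X : C} (P : ProjectiveResolution X) : P.complex.X 0 ⟶ X :=
  P.π.f 0

section LeftDerivedDesc

variable {X X' : C} {T T' : D} {n : ℕ} [HasProjectiveResolutions C] (G : C ⥤ D) [G.Additive]

/-- The morphism `LₙG(X) ⟶ T` induced by a cocycle `β : G(Pₙ) ⟶ T`. -/
def leftDerivedDesc (P : ProjectiveResolution X) (β : G.obj (P.complex.X n) ⟶ T)
    (hβ : G.map (P.complex.d (n + 1) n) ≫ β = 0) : (G.leftDerived n).obj X ⟶ T :=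
  (P.isoLeftDerivedObj G n).hom ≫
    homologyDesc ((G.mapHomologicalComplex _).obj P.complex) (ChainComplex.prev _ n) β hβ

variable {G}

theorem leftDerivedDesc_comp (P : ProjectiveResolution X) (β : G.obj (P.complex.X n) ⟶ T)
    (hβ : G.map (P.complex.d (n + 1) n) ≫ β = 0) (f : T ⟶ T') :
    leftDerivedDesc G P β hβ ≫ f =
      leftDerivedDesc G P (β ≫ f) (by rw [reassoc_of% hβ, zero_comp]) :=
  (Category.assoc _ _ _).trans (congrArg _ (homologyDesc_comp _ _ _ _))

theorem map_comp_leftDerivedDesc {P : ProjectiveResolution X} {P' : ProjectiveResolution X'}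
    (f : X' ⟶ X) (g : P'.complex ⟶ P.complex)
    (hg : g.f 0 ≫ augmentation P = augmentation P' ≫ f) (β : G.obj (P.complex.X n) ⟶ T)
    (hβ : G.map (P.complex.d (n + 1) n) ≫ β = 0) :
    (G.leftDerived n).map f ≫ leftDerivedDesc G P β hβ =
      leftDerivedDesc G P' (G.map (g.f n) ≫ β)
        (by rw [← G.map_comp_assoc, ← g.comm, G.map_comp_assoc, hβ, comp_zero]) :=
  (P'.isoLeftDerivedObj_hom_naturality_assoc f P g hg G n _).trans
    (congrArg _ (homologyMap_comp_homologyDesc _ _ _ _))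

theorem leftDerivedDesc_eq_of_sub_eq {P : ProjectiveResolution X}
    {β γ : G.obj (P.complex.X n) ⟶ T} (hβ : G.map (P.complex.d (n + 1) n) ≫ β = 0)
    (hγ : G.map (P.complex.d (n + 1) n) ≫ γ = 0) {k : ℕ} (ψ : G.obj (P.complex.X k) ⟶ T)
    (hψ : β - γ = G.map (P.complex.d n k) ≫ ψ) :
    leftDerivedDesc G P β hβ = leftDerivedDesc G P γ hγ :=
  congrArg _ (homologyDesc_eq_of_sub_eq _ _ _ ψ hψ)

theorem leftDerivedDesc_zero (P : ProjectiveResolution X) :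
    leftDerivedDesc (n := n) G P (0 : _ ⟶ T) comp_zero = 0 :=
  (congrArg _ (homologyDesc_zero _)).trans comp_zero

theorem exists_comp_leftDerivedDesc_eq {P : ProjectiveResolution X}
    (β : G.obj (P.complex.X (n + 1)) ⟶ T) (hβ : G.map (P.complex.d (n + 2) (n + 1)) ≫ β = 0)
    (z : T' ⟶ G.obj (P.complex.X (n + 1))) (hz : z ≫ G.map (P.complex.d (n + 1) n) = 0) :
    ∃ γ : T' ⟶ (G.leftDerived (n + 1)).obj X, γ ≫ leftDerivedDesc G P β hβ = z ≫ β := by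
  let K := (G.mapHomologicalComplex (ComplexShape.down ℕ)).obj P.complex
  let γ : T' ⟶ K.homology (n + 1) :=
    K.liftCycles z n (ChainComplex.next_nat_succ n) hz ≫ K.homologyπ (n + 1)
  refine ⟨γ ≫ (P.isoLeftDerivedObj G (n + 1)).inv, ?_⟩
  calc (γ ≫ (P.isoLeftDerivedObj G (n + 1)).inv) ≫ leftDerivedDesc G P β hβ
    _ = γ ≫ homologyDesc K (ChainComplex.prev _ (n + 1)) β hβ :=
      (Category.assoc _ _ _).trans (congrArg (γ ≫ ·) (Iso.inv_hom_id_assoc _ _))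
    _ = z ≫ β :=
      (Category.assoc _ _ _).trans (liftCycles_comp_homologyπ_comp_homologyDesc _ _ _ _ _ _)

end LeftDerivedDesc

/-- A partial lift of a projective resolution `P` of `X₃` to a short complex `X₁ ⟶ X₂ ⟶ X₃`: maps
`P₀ ⟶ X₂` and `P₁ ⟶ X₁` over the augmentation. The degree-one map is the cocycle which represents
the connecting morphism. -/
structure ResolutionLift (S : ShortComplex C) (P : ProjectiveResolution S.X₃) where
  zero : P.complex.X 0 ⟶ S.X₂
  one : P.complex.X 1 ⟶ S.X₁
  zero_comp_g : zero ≫ S.g = augmentation P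
  one_comp_f : one ≫ S.f = P.complex.d 1 0 ≫ zero

namespace ResolutionLift

variable {S S' : ShortComplex C}

theorem nonempty_of_shortExact (hS : S.ShortExact) (P : ProjectiveResolution S.X₃) :
    Nonempty (ResolutionLift S P) := by
  have := hS.mono_f
  have := hS.epi_g
  have := P.projective 0
  have hd : (P.complex.d 1 0 ≫ Projective.factorThru (augmentation P) S.g) ≫ S.g = 0 := by
    rw [Category.assoc, Projective.factorThru_comp]
    exact P.complex_d_comp_π_f_zero
  exact ⟨⟨_, hS.exact.lift _ hd, Projective.factorThru_comp _ _, hS.exact.lift_f _ hd⟩⟩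

variable {P : ProjectiveResolution S.X₃} {P' : ProjectiveResolution S'.X₃}

theorem d_comp_one [Mono S.f] (l : ResolutionLift S P) : P.complex.d 2 1 ≫ l.one = 0 := by
  rw [← cancel_mono S.f, Category.assoc, l.one_comp_f, P.complex.d_comp_d_assoc, zero_comp,
    zero_comp]

theorem exists_homotopy (hS : S.ShortExact) (φ : S' ⟶ S) (l' : ResolutionLift S' P')
    (l : ResolutionLift S P) (g : P'.complex ⟶ P.complex)
    (hg : g.f 0 ≫ augmentation P = augmentation P' ≫ φ.τ₃) :
    ∃ h : P'.complex.X 0 ⟶ S.X₁, g.f 1 ≫ l.one - l'.one ≫ φ.τ₁ = P'.complex.d 1 0 ≫ h := by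
  have := hS.mono_f
  have hker : (g.f 0 ≫ l.zero - l'.zero ≫ φ.τ₂) ≫ S.g = 0 := by
    rw [Preadditive.sub_comp, Category.assoc, Category.assoc, φ.comm₂₃, l.zero_comp_g,
      reassoc_of% l'.zero_comp_g, hg, sub_self]
  refine ⟨hS.exact.lift _ hker, ?_⟩
  rw [← cancel_mono S.f, Category.assoc, hS.exact.lift_f, Preadditive.sub_comp,
    Preadditive.comp_sub, Category.assoc, Category.assoc, φ.comm₁₂, l.one_comp_f,
    reassoc_of% l'.one_comp_f, g.comm_assoc]

/-- The presentation `P₁ ⟶ P₀ ⊞ X₁ ⟶ X₂` of the middle term of a short exact sequence. -/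
def presentation (l : ResolutionLift S P) : ShortComplex C :=
  .mk (biprod.lift (P.complex.d 1 0) (-l.one)) (biprod.desc l.zero S.f)
    (by simp [biprod.lift_desc, l.one_comp_f])

theorem epi_presentation_g (hS : S.ShortExact) (l : ResolutionLift S P) :
    Epi l.presentation.g := by
  have := hS.epi_g
  refine (Preadditive.epi_iff_cancel_zero (biprod.desc l.zero S.f)).2 fun T h hh => ?_
  have hf : S.f ≫ h = 0 := by simpa using biprod.inr ≫= hh
  have hzero : l.zero ≫ h = 0 := by simpa using biprod.inl ≫= hh
  have haug : augmentation P ≫ hS.exact.desc h hf = 0 := by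
    rw [← l.zero_comp_g, Category.assoc, hS.exact.g_desc, hzero]
  have : Epi (augmentation P) := inferInstanceAs (Epi (P.π.f 0))
  rw [← hS.exact.g_desc h hf, zero_of_epi_comp _ haug, comp_zero]

theorem presentation_exact [Mono S.f] (l : ResolutionLift S P) : l.presentation.Exact := by
  rw [ShortComplex.exact_iff_exact_up_to_refinements]
  intro T (x : T ⟶ P.complex.X 0 ⊞ S.X₁) (hx : x ≫ biprod.desc l.zero S.f = 0)
  have hsum : (x ≫ biprod.fst) ≫ l.zero + (x ≫ biprod.snd) ≫ S.f = 0 := by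
    simpa [biprod.desc_eq] using hx
  have haug : (x ≫ biprod.fst) ≫ augmentation P = 0 := by
    simpa [← l.zero_comp_g] using hsum =≫ S.g
  obtain ⟨T', q, hq, u, hu⟩ := P.exact₀.exact_up_to_refinements _ haug
  replace hu : q ≫ x ≫ biprod.fst = u ≫ P.complex.d 1 0 := hu
  refine ⟨T', q, hq, u, biprod.hom_ext _ _ ?_ ?_⟩
  · simpa [presentation] using hu
  · rw [← cancel_mono S.f]
    have := q ≫= eq_neg_of_add_eq_zero_right hsum
    simpa [presentation, l.one_comp_f, ← reassoc_of% hu] using this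

variable (G : C ⥤ D) [G.Additive]

theorem exists_cycle_of_comp_map_eq_zero [PreservesFiniteColimits G] (hS : S.ShortExact)
    (l : ResolutionLift S P) {T : D} (x : T ⟶ G.obj S.X₁) (hx : x ≫ G.map S.f = 0) :
    ∃ (T' : D) (q : T' ⟶ T) (_ : Epi q) (z : T' ⟶ G.obj (P.complex.X 1)),
      z ≫ G.map (P.complex.d 1 0) = 0 ∧ q ≫ x = z ≫ G.map l.one := by
  have hzero : (x ≫ G.map biprod.inr) ≫ G.map (biprod.desc l.zero S.f) = 0 := by
    rw [Category.assoc, ← G.map_comp, biprod.inr_desc, hx]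
  have := hS.mono_f
  obtain ⟨T', q, hq, (z : T' ⟶ G.obj (P.complex.X 1)), hz⟩ :=
    (l.presentation_exact.map_of_epi_of_preservesCokernel G (l.epi_presentation_g hS)
      inferInstance).exact_up_to_refinements _ hzero
  replace hz : q ≫ x ≫ G.map biprod.inr =
    z ≫ G.map (biprod.lift (P.complex.d 1 0) (-l.one)) := hz
  have hfst : z ≫ G.map (P.complex.d 1 0) = 0 := by
    simpa [← G.map_comp] using (hz =≫ G.map biprod.fst).symm
  have hsnd : q ≫ x = -(z ≫ G.map l.one) := by
    simpa [← G.map_comp] using hz =≫ G.map biprod.snd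
  exact ⟨T', q, hq, -z, by rw [Preadditive.neg_comp, hfst, neg_zero],
    by rw [Preadditive.neg_comp, hsnd]⟩

variable [HasProjectiveResolutions C]

/-- The connecting morphism `L₁G(X₃) ⟶ G(X₁)` of a short exact sequence. -/
def connecting [Mono S.f] (l : ResolutionLift S P) : (G.leftDerived 1).obj S.X₃ ⟶ G.obj S.X₁ :=
  leftDerivedDesc G P (G.map l.one) (by rw [← G.map_comp, l.d_comp_one, G.map_zero])

theorem map_comp_connecting (hS : S.ShortExact) [Mono S.f] [Mono S'.f] (φ : S' ⟶ S)
    (l' : ResolutionLift S' P') (l : ResolutionLift S P) :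
    (G.leftDerived 1).map φ.τ₃ ≫ l.connecting G = l'.connecting G ≫ G.map φ.τ₁ := by
  let g := ProjectiveResolution.lift φ.τ₃ P' P
  have hg : g.f 0 ≫ augmentation P = augmentation P' ≫ φ.τ₃ :=
    ProjectiveResolution.lift_commutes_zero φ.τ₃ P' P
  obtain ⟨h, hh⟩ := exists_homotopy hS φ l' l g hg
  rw [connecting, connecting, map_comp_leftDerivedDesc φ.τ₃ g hg, leftDerivedDesc_comp]
  exact leftDerivedDesc_eq_of_sub_eq _ _ (G.map h) (by simp only [← G.map_comp, ← G.map_sub, hh])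

theorem connecting_comp_map [Mono S.f] (l : ResolutionLift S P) :
    l.connecting G ≫ G.map S.f = 0 := by
  rw [connecting, leftDerivedDesc_comp, ← leftDerivedDesc_zero P]
  exact leftDerivedDesc_eq_of_sub_eq _ _ (G.map l.zero)
    (by rw [sub_zero, ← G.map_comp, l.one_comp_f, G.map_comp])

theorem connecting_exact [PreservesFiniteColimits G] (hS : S.ShortExact) [Mono S.f]
    (l : ResolutionLift S P) :
    (ShortComplex.mk (l.connecting G) (G.map S.f) (l.connecting_comp_map G)).Exact := by
  rw [ShortComplex.exact_iff_exact_up_to_refinements]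
  intro T x hx
  obtain ⟨T', q, hq, z, hz, hqx⟩ := l.exists_cycle_of_comp_map_eq_zero G hS x hx
  obtain ⟨γ, hγ⟩ := exists_comp_leftDerivedDesc_eq (G.map l.one)
    (by rw [← G.map_comp, l.d_comp_one, G.map_zero]) z hz
  exact ⟨T', q, hq, γ, hqx.trans hγ.symm⟩

end ResolutionLift

end LeftDerived

section Ext

open Limits Opposite

universe v

section LinearYoneda

variable {R : Type*} [CommRing R] {C : Type*} [Category.{v} C] [Abelian C] [Linear R C]

theorem preservesFiniteColimits_linearYoneda_rightOp (N : C) :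
    PreservesFiniteColimits ((linearYoneda R C).obj N).rightOp := by
  have : PreservesLimits ((linearYoneda R C).obj N ⋙ forget (ModuleCat.{v} R)) :=
    inferInstanceAs (PreservesLimits (yoneda.obj N))
  have : PreservesLimits ((linearYoneda R C).obj N) :=
    preservesLimits_of_reflects_of_preserves _ (forget (ModuleCat.{v} R))
  exact preservesFiniteColimits_rightOp _

variable [HasProjectiveResolutions C] {S S' : ShortComplex C} {P : ProjectiveResolution S.X₃}
  {P' : ProjectiveResolution S'.X₃} [Mono S.f] {N : C}

variable (R) in
/-- The connecting homomorphism `Hom(X₁, N) → Ext¹(X₃, N)` of a short exact sequence. -/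
def extConnecting (l : ResolutionLift S P) (N : C) :
    (S.X₁ ⟶ N) →ₗ[R] ((((linearYoneda R C).obj N).rightOp.leftDerived 1).obj S.X₃).unop :=
  (l.connecting ((linearYoneda R C).obj N).rightOp).unop.hom

theorem extConnecting_naturality (hS : S.ShortExact) [Mono S'.f] (φ : S' ⟶ S)
    (l' : ResolutionLift S' P') (l : ResolutionLift S P) (α : S.X₁ ⟶ N) :
    ((((linearYoneda R C).obj N).rightOp.leftDerived 1).map φ.τ₃).unop.hom (extConnecting R l N α) =
      extConnecting R l' N (φ.τ₁ ≫ α) :=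
  congrArg (fun f => f.unop.hom α)
    (ResolutionLift.map_comp_connecting ((linearYoneda R C).obj N).rightOp hS φ l' l)

theorem exists_comp_eq_of_extConnecting_eq_zero (hS : S.ShortExact) (l : ResolutionLift S P)
    (α : S.X₁ ⟶ N) (hα : extConnecting R l N α = 0) : ∃ β : S.X₂ ⟶ N, S.f ≫ β = α := by
  have := preservesFiniteColimits_linearYoneda_rightOp (R := R) N
  have hexact := (l.connecting_exact ((linearYoneda R C).obj N).rightOp hS).unop
  exact (ShortComplex.moduleCat_exact_iff _).1 hexact α hα

end LinearYoneda

section LocalCohomology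

variable {R : Type} [CommRing R]

/-- The short exact sequence `0 → I → R → R ⧸ I → 0`. -/
abbrev idealShortComplex (I : Ideal R) : ShortComplex (ModuleCat.{0} R) :=
  ModuleCat.shortComplexOfCompEqZero (Submodule.subtype I) (Submodule.mkQ I)
    (LinearMap.exact_subtype_mkQ I).linearMap_comp_eq_zero

theorem idealShortComplex_shortExact (I : Ideal R) : (idealShortComplex I).ShortExact :=
  ModuleCat.shortComplex_shortExact _ (LinearMap.exact_subtype_mkQ I) I.injective_subtype
    (Submodule.mkQ_surjective I)

/-- The morphism of short exact sequences given by an inclusion `I ≤ J` of ideals, the identity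
on `R` and the projection `R ⧸ I → R ⧸ J`. -/
abbrev idealShortComplexMap {I J : Ideal R} (h : I ≤ J) :
    idealShortComplex I ⟶ idealShortComplex J where
  τ₁ := ModuleCat.ofHom (Submodule.inclusion h)
  τ₂ := 𝟙 _
  τ₃ := ModuleCat.ofHom (Submodule.mapQ I J LinearMap.id h)

theorem exists_map_eq_zero_of_mem_annihilator_localCohomology {J : Ideal R} {i : ℕ}
    {N : ModuleCat.{0} R} {y : R} (hy : y ∈ Module.annihilator R ((localCohomology J i).obj N))
    (n : ℕ) (e : ((Ext R (ModuleCat.{0} R) i).obj (op (ModuleCat.of R (R ⧸ J ^ n)))).obj N) :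
    ∃ (k : ℕ) (h : n ≤ k), (((Ext R (ModuleCat.{0} R) i).map
      (ModuleCat.ofHom (Submodule.mapQ (J ^ k) (J ^ n) LinearMap.id
        (Ideal.pow_le_pow_right h))).op).app N).hom (y • e) = 0 := by
  let D := localCohomology.diagram (localCohomology.idealPowersDiagram J) i
  have : HasColimit D := localCohomology.hasColimitDiagram.{0, 0} _ _
  let ev := (evaluation (ModuleCat.{0} R) (ModuleCat.{0} R)).obj N
  have hcolim : IsColimit (ev.mapCocone (colimit.cocone D)) :=
    isColimitOfPreserves ev (colimit.isColimit D)
  let e' : (D ⋙ ev).obj (op (op n)) := e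
  have hzero : (ev.mapCocone (colimit.cocone D)).ι.app (op (op n)) (y • e') =
      (ev.mapCocone (colimit.cocone D)).ι.app (op (op n)) 0 := by
    rw [map_zero, map_smul]
    exact Module.mem_annihilator.1 hy _
  obtain ⟨k, f, _, hk⟩ := Concrete.isColimit_exists_of_rep_eq (D ⋙ ev) hcolim _ _ hzero
  exact ⟨k.unop.unop, leOfHom f.unop.unop, hk.trans (map_zero ((D ⋙ ev).map f).hom)⟩

theorem exists_smul_eq_of_mem_annihilator_localCohomology {J : Ideal R} {N : ModuleCat.{0} R}
    {y : R} (hy : y ∈ Module.annihilator R ((localCohomology J 1).obj N)) {n : ℕ}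
    (φ : ↥(J ^ n) →ₗ[R] N) :
    ∃ (k : ℕ) (h : n ≤ k) (c : N), ∀ a : ↥(J ^ k),
      y • φ (Submodule.inclusion (Ideal.pow_le_pow_right h) a) = a.1 • c := by
  let f : (idealShortComplex (J ^ n)).X₁ ⟶ N := ModuleCat.ofHom φ
  have hS (t : ℕ) := idealShortComplex_shortExact (J ^ t)
  have := fun t => (hS t).mono_f
  obtain ⟨l⟩ := ResolutionLift.nonempty_of_shortExact (hS n)
    (projectiveResolution (idealShortComplex (J ^ n)).X₃)
  obtain ⟨k, h, hk⟩ := exists_map_eq_zero_of_mem_annihilator_localCohomology hy n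
    (extConnecting R l N f)
  obtain ⟨l'⟩ := ResolutionLift.nonempty_of_shortExact (hS k)
    (projectiveResolution (idealShortComplex (J ^ k)).X₃)
  let ι := idealShortComplexMap (Ideal.pow_le_pow_right h : J ^ k ≤ J ^ n)
  have hzero : extConnecting R l' N (ι.τ₁ ≫ (y • f)) = 0 := by
    rw [← extConnecting_naturality (hS n) ι l' l, map_smul]
    exact hk
  obtain ⟨β, hβ⟩ := exists_comp_eq_of_extConnecting_eq_zero (hS k) l' _ hzero
  refine ⟨k, h, β.hom (1 : R), fun a => ?_⟩
  have ha : β.hom a.1 = y • φ (Submodule.inclusion (Ideal.pow_le_pow_right h) a) :=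
    congrArg (fun g => g.hom a) hβ
  rw [← ha, ← map_smul]
  simp

end LocalCohomology

end Ext

section Conductor

section Denominators

variable {R K : Type*} [CommRing R] [CommRing K] [Algebra R K] [IsFractionRing R K] {z : K}

theorem exists_notMem_smul_mem_one (hz : IsIntegral R z) (p : Ideal R) [p.IsPrime]
    [IsIntegrallyClosed (Localization.AtPrime p)] : ∃ s ∉ p, s • z ∈ (1 : Submodule R K) := by
  let L := FractionRing (Localization.AtPrime p)
  have hunit (b : nonZeroDivisors R) : IsUnit (Algebra.ofId R L b) := by
    have hb : algebraMap R (Localization.AtPrime p) b ∈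
        nonZeroDivisors (Localization.AtPrime p) :=
      IsLocalization.nonZeroDivisors_le_comap p.primeCompl _ b.2
    exact IsLocalization.map_units L ⟨_, hb⟩
  let g : K →ₐ[R] L := IsLocalization.liftAlgHom hunit
  obtain ⟨w, hw⟩ := IsIntegrallyClosed.isIntegral_iff.1
    ((hz.map g).tower_top (A := Localization.AtPrime p))
  obtain ⟨⟨c, s⟩, hcs : w * algebraMap R _ s = algebraMap R _ c⟩ :=
    IsLocalization.surj p.primeCompl w
  obtain ⟨⟨a, b⟩, hab : z * algebraMap R K b = algebraMap R K a⟩ :=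
    IsLocalization.surj (nonZeroDivisors R) z
  have hcross : algebraMap R (Localization.AtPrime p) (s * a) = algebraMap R _ (c * b) := by
    apply IsFractionRing.injective (Localization.AtPrime p) L
    have hcs' := congrArg (algebraMap _ L) hcs
    have hab' := congrArg g hab
    simp only [map_mul, AlgHom.commutes, hw, ← IsScalarTower.algebraMap_apply] at hcs' hab' ⊢
    linear_combination algebraMap R L b * hcs' - algebraMap R L s * hab'
  obtain ⟨u, hu⟩ := (IsLocalization.eq_iff_exists p.primeCompl _).1 hcross
  refine ⟨u * s, (u * s).2, Submodule.mem_one.2 ⟨u * c, ?_⟩⟩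
  apply (IsLocalization.map_units K b).mul_right_cancel
  rw [Algebra.smul_def, mul_assoc _ z, hab, ← map_mul, ← map_mul, mul_assoc, mul_assoc, hu]

theorem exists_pow_le_colon_of_isIntegral {J : Ideal R} (hJ : J.FG)
    (hnormal : ∀ (p : Ideal R) [p.IsPrime], ¬ J ≤ p → IsIntegrallyClosed (Localization.AtPrime p))
    (hz : IsIntegral R z) : ∃ n : ℕ, J ^ n ≤ (1 : Submodule R K).colon {z} := by
  refine Ideal.exists_pow_le_of_le_radical_of_fg ?_ hJ
  rw [Ideal.radical_eq_sInf]
  refine le_sInf fun p ⟨hle, hp⟩ => ?_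
  by_contra hJp
  have := hnormal p hJp
  obtain ⟨s, hsp, hsz⟩ := exists_notMem_smul_mem_one hz p
  exact hsp (hle (Submodule.mem_colon_singleton.2 hsz))

theorem exists_linearMap_algebraMap_eq_smul {I : Ideal R}
    (hI : I ≤ (1 : Submodule R K).colon {z}) :
    ∃ φ : I →ₗ[R] R, ∀ a : I, algebraMap R K (φ a) = a.1 • z := by
  let e := LinearEquiv.ofInjective (Algebra.linearMap R K) (IsFractionRing.injective R K)
  have hrange (a : I) : a.1 • z ∈ LinearMap.range (Algebra.linearMap R K) :=
    Submodule.one_eq_range (R := R) (A := K) ▸ Submodule.mem_colon_singleton.1 (hI a.2)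
  let mulz : I →ₗ[R] LinearMap.range (Algebra.linearMap R K) :=
    ((LinearMap.toSpanSingleton R K z).comp I.subtype).codRestrict _ hrange
  exact ⟨e.symm.toLinearMap.comp mulz, fun a => congrArg Subtype.val (e.apply_symm_apply (mulz a))⟩

theorem isIntegrallyClosed_of_forall_isUnit
    (h : ∀ r ∈ nonZeroDivisors R, IsUnit r) : IsIntegrallyClosed R := by
  have : IsFractionRing R R := IsFractionRing.self_iff_nonZeroDivisors_le_isUnit.2 h
  exact (isIntegrallyClosed_iff R).2 fun {x} _ => ⟨x, rfl⟩

end Denominators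

variable {R : Type} [CommRing R]

theorem mem_conductorIdeal_iff_s18 {y : R} :
    y ∈ conductorIdeal R ↔
      ∀ z : FractionRing R, IsIntegral R z → y • z ∈ (1 : Submodule R (FractionRing R)) := by
  simp only [conductorIdeal, Module.mem_annihilator, (Submodule.mkQ_surjective _).forall,
    Subtype.forall, Submodule.mkQ_apply, ← Submodule.Quotient.mk_smul,
    Submodule.Quotient.mk_eq_zero, LinearMap.mem_range, Submodule.mem_one, Subtype.ext_iff]
  rfl

theorem conductorIdeal_eq_top [IsIntegrallyClosed R] : conductorIdeal R = ⊤ := by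
  rw [Ideal.eq_top_iff_one, mem_conductorIdeal_iff_s18]
  intro z hz
  rw [one_smul, Submodule.mem_one]
  exact IsIntegrallyClosed.isIntegral_iff.1 hz

theorem conductorIdeal_eq_top_of_maximalIdeal_le [IsRegularLocalRing R]
    (h : maximalIdeal R ≤ conductorIdeal R) : conductorIdeal R = ⊤ := by
  have := isDomain_of_isRegularLocalRing R
  obtain hdim | hdim := le_or_gt (ringKrullDim R) 1
  · have := isIntegrallyClosed_of_ringKrullDim_le_one hdim
    exact conductorIdeal_eq_top
  · rw [Ideal.eq_top_iff_one, mem_conductorIdeal_iff_s18]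
    intro z hz
    rw [one_smul]
    exact mem_one_of_maximalIdeal_le_colon hdim fun y hy =>
      Submodule.mem_colon_singleton.2 (mem_conductorIdeal_iff_s18.1 (h hy) z hz)

theorem annihilator_localCohomology_one_le_conductorIdeal {J : Ideal R} (hJ : J.FG)
    (hnormal : ∀ (p : Ideal R) [p.IsPrime], ¬ J ≤ p → IsIntegrallyClosed (Localization.AtPrime p))
    {w : R} (hw : w ∈ J) (hw' : w ∈ nonZeroDivisors R) :
    Module.annihilator R ((localCohomology J 1).obj (ModuleCat.of R R)) ≤ conductorIdeal R := by
  intro y hy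
  refine mem_conductorIdeal_iff_s18.2 fun z hz => ?_
  obtain ⟨n, hn⟩ := exists_pow_le_colon_of_isIntegral hJ hnormal hz
  obtain ⟨φ, hφ⟩ := exists_linearMap_algebraMap_eq_smul hn
  obtain ⟨k, hnk, c, hc⟩ := exists_smul_eq_of_mem_annihilator_localCohomology hy φ
  have hwk := hc ⟨w ^ k, Ideal.pow_mem_pow hw k⟩
  replace hwk := congrArg (algebraMap R (FractionRing R)) hwk
  rw [smul_eq_mul, smul_eq_mul, map_mul, map_mul, hφ, ← Algebra.smul_def, ← Algebra.smul_def,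
    smul_comm] at hwk
  refine Submodule.mem_one.2 ⟨c, ?_⟩
  apply (IsLocalization.map_units (FractionRing R) ⟨w ^ k, pow_mem hw' k⟩).mul_left_cancel
  rw [← Algebra.smul_def, ← Algebra.smul_def]
  exact hwk.symm

theorem maximalIdeal_le_conductorIdeal [IsLocalRing R] [IsNoetherianRing R]
    (hnormal : ∀ (p : Ideal R) [p.IsPrime], p ≠ maximalIdeal R →
      IsIntegrallyClosed (Localization.AtPrime p))
    (hann : maximalIdeal R ≤ Module.annihilator R (localCohMod R 1 R)) :
    maximalIdeal R ≤ conductorIdeal R := by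
  by_cases h : ∃ w ∈ maximalIdeal R, w ∈ nonZeroDivisors R
  · obtain ⟨w, hw, hw'⟩ := h
    exact hann.trans <| annihilator_localCohomology_one_le_conductorIdeal
      (IsNoetherian.noetherian _) (fun p _ hp => hnormal p fun heq => hp heq.ge) hw hw'
  · have := isIntegrallyClosed_of_forall_isUnit (R := R) fun r hr =>
      by_contra fun hunit => h ⟨r, hunit, hr⟩
    exact conductorIdeal_eq_top (R := R) ▸ le_top

end Conductor

section SerreR1

variable {R : Type} [CommRing R]

theorem IsRegularLocal.isRegularLocalRing [IsLocalRing R] (h : IsRegularLocal R) :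
    IsRegularLocalRing R := by
  obtain ⟨_, s, hs, hcard⟩ := h
  exact isRegularLocalRing_of_span_eq_maximalIdeal hs hcard.le

theorem SerreR1.isIntegrallyClosed_localization [IsLocalRing R] [IsNoetherianRing R]
    (h : SerreR1 R) (hdim : ringKrullDim R ≤ 2) (p : Ideal R) [p.IsPrime]
    (hp : p ≠ maximalIdeal R) : IsIntegrallyClosed (Localization.AtPrime p) := by
  have hlt : p.height < (maximalIdeal R).height :=
    Ideal.height_strict_mono_of_isPrime_of_isPrime
      ((le_maximalIdeal (Ideal.IsPrime.ne_top inferInstance)).lt_of_ne hp)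
  have hheight : (maximalIdeal R).height ≤ 2 := by
    rw [← maximalIdeal_height_eq_ringKrullDim] at hdim
    exact WithBot.coe_le_coe.1 hdim
  have hdim_le : ringKrullDim (Localization.AtPrime p) ≤ 1 := by
    rw [IsLocalization.AtPrime.ringKrullDim_eq_height p]
    exact_mod_cast Order.le_of_lt_add_one (one_add_one_eq_two (R := ℕ∞) ▸ hlt.trans_le hheight)
  have := (h p hdim_le).isRegularLocalRing
  exact isIntegrallyClosed_of_ringKrullDim_le_one hdim_le

end SerreR1

theorem isRegularLocalRing_of_isSystemOfParameters {R : Type} [CommRing R] [IsLocalRing R]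
    [IsNoetherianRing R] {d : ℕ} {x : Fin d → R} (hx : IsSystemOfParameters R x)
    (hle : maximalIdeal R ≤ Ideal.span (Set.range x)) : IsRegularLocalRing R := by
  classical
  obtain ⟨hdim, hmem, -⟩ := hx
  refine isRegularLocalRing_of_span_eq_maximalIdeal (s := Finset.univ.image x) ?_ ?_
  · rw [Finset.coe_image, Finset.coe_univ, Set.image_univ]
    exact le_antisymm (Ideal.span_le.2 (Set.range_subset_iff.2 hmem)) hle
  · rw [← hdim]
    exact Nat.cast_le.2 (Finset.card_image_le.trans_eq (Finset.card_fin d))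

theorem stmt18_general (R : Type) [CommRing R] [IsLocalRing R] [IsNoetherianRing R]
    (hnormal : ∀ (p : Ideal R) [p.IsPrime], p ≠ maximalIdeal R →
      IsIntegrallyClosed (Localization.AtPrime p))
    (hqb : maximalIdeal R ≤ Module.annihilator R (localCohMod R 1 R))
    {d : ℕ} (x : Fin d → R) (hx : IsSystemOfParameters R x) :
    ¬ conductorIdeal R ≤ Ideal.span (Set.range x) := by
  intro hle
  have hmax : maximalIdeal R ≤ conductorIdeal R := maximalIdeal_le_conductorIdeal hnormal hqb
  have := isRegularLocalRing_of_isSystemOfParameters hx (hmax.trans hle)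
  have htop : conductorIdeal R = ⊤ := conductorIdeal_eq_top_of_maximalIdeal_le hmax
  have hproper : Ideal.span (Set.range x) ≤ maximalIdeal R :=
    Ideal.span_le.2 (Set.range_subset_iff.2 hx.2.1)
  exact Ideal.IsPrime.ne_top' (top_le_iff.1 (htop ▸ hle.trans hproper))

-- STATEMENT 18
theorem stmt18 (R : Type) [CommRing R] [IsLocalRing R] [IsNoetherianRing R]
    (hau : AnalyticallyUnramified R) (hdim : ringKrullDim R = 2)
    (hR1 : SerreR1 R)
    (hqb : maximalIdeal R ≤ Module.annihilator R (localCohMod R 1 R)) :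
    ∀ x : Fin 2 → R, IsSystemOfParameters R x →
      ¬ conductorIdeal R ≤ Ideal.span (Set.range x) :=
  stmt18_general R (hR1.isIntegrallyClosed_localization hdim.le) hqb
end
end
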